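/- arXiv:2307.09461 — 8 statements merged into one kernel-verified Lean document; each statement's English description precedes it below -/
import Mathlib

section
/- For every finite oriented graph D and every choice of positive integers k and ℓ, there exists a finite oriented graph D* together with a surjective homomorphism ψ : V(D*) → V(D) such that: (i) the girth of D* is at least ℓ; (ii) for every oriented graph C with at most k vertices, there exists a homomorphism from D* to C if and only if there exists a homomorphism from D to C; and (iii) for every D-pointed oriented graph C with at most k vertices and for every homomorphism φ : V(D*) → V(C), there exists a unique homomorphism f : V(D) → V(C) such that φ = f ∘ ψ. -/
/-- An oriented graph on vertex type `V`: a loopless digraph in which for every pair of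
vertices at most one of the two opposite arcs is present, encoded as an irreflexive,
asymmetric adjacency relation. -/
structure OrientedGraph (V : Type) where
  Adj : V → V → Prop
  irrefl : ∀ v, ¬ Adj v v
  asymm : ∀ u v, Adj u v → ¬ Adj v u

/-- `f` is a homomorphism of oriented graphs from `D` to `C` (a `C`-colouring of `D`):
it maps arcs to arcs. -/
def IsHom {V W : Type} (D : OrientedGraph V) (C : OrientedGraph W) (f : V → W) : Prop :=
  ∀ ⦃x y⦄, D.Adj x y → C.Adj (f x) (f y)

/-- The oriented graph `G` has a directed cycle of length `m`: `m` distinct vertices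
cyclically joined by arcs. -/
def HasCycleOfLength {V : Type} (G : OrientedGraph V) (m : ℕ) : Prop :=
  ∃ c : ZMod m → V, Function.Injective c ∧ ∀ i, G.Adj (c i) (c (i + 1))

/-- The girth of `G` (the length of a shortest directed cycle, infinite if none) is at
least `ℓ`: there is no directed cycle of length less than `ℓ`. -/
def GirthAtLeast {V : Type} (G : OrientedGraph V) (ℓ : ℕ) : Prop :=
  ∀ m : ℕ, 0 < m → m < ℓ → ¬ HasCycleOfLength G m

/-- The girth of `G` is exactly `ℓ`: there is a directed cycle of length `ℓ` and none
shorter. -/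
def GirthEq {V : Type} (G : OrientedGraph V) (ℓ : ℕ) : Prop :=
  HasCycleOfLength G ℓ ∧ GirthAtLeast G ℓ

/-- `f` is an automorphism of the oriented graph `D`. -/
def IsAuto {V : Type} (D : OrientedGraph V) (f : V → V) : Prop :=
  Function.Bijective f ∧ ∀ x y, D.Adj x y ↔ D.Adj (f x) (f y)

/-- `D` is a core: every homomorphism from `D` to itself is an automorphism. -/
def IsCore {V : Type} (D : OrientedGraph V) : Prop :=
  ∀ f : V → V, IsHom D D f → IsAuto D f

/-- `C` is `D`-pointed: there do not exist two distinct `C`-colourings of `D` that agree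
on all but one vertex of `D`. -/
def IsPointedOf {VC VD : Type} (C : OrientedGraph VC) (D : OrientedGraph VD) : Prop :=
  ¬ ∃ f g : VD → VC, IsHom D C f ∧ IsHom D C g ∧ f ≠ g ∧
      ∃ v : VD, ∀ u : VD, u ≠ v → f u = g u

/-- `T` is a tournament: between any two distinct vertices there is an arc. -/
def IsTournament {V : Type} (T : OrientedGraph V) : Prop :=
  ∀ u v : V, u ≠ v → T.Adj u v ∨ T.Adj v u

/-- The oriented chromatic number of `D`: the minimum number of vertices of an oriented
graph `C` such that there exists a homomorphism from `D` to `C`. -/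
noncomputable def orientedChromaticNumber {V : Type} (D : OrientedGraph V) : ℕ :=
  sInf {k : ℕ | ∃ C : OrientedGraph (Fin k), ∃ f : V → Fin k, IsHom D C f}


/-- No multiset of fewer than `p` nonzero elements has vanishing power sums. -/
lemma power_sums_ne {p : ℕ} [Fact p.Prime] {ι : Type} [Fintype ι] [Nonempty ι] {d : ℕ}
    (hd : Fintype.card ι ≤ d) (hp : Fintype.card ι < p) (t : ι → ZMod p) (ht : ∀ i, t i ≠ 0)
    (hsum : ∀ j : Fin d, ∑ i, t i ^ ((j : ℕ) + 1) = 0) : False := by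
  classical
  obtain ⟨i0⟩ := ‹Nonempty ι›
  set T : Finset (ZMod p) := (Finset.univ.image t).erase (t i0) with hT
  set Q : Polynomial (ZMod p) := ∏ y ∈ T, (Polynomial.X - Polynomial.C y) with hQ
  have hTc : T.card + 1 ≤ Fintype.card ι := by
    have h1 : T.card + 1 = (Finset.univ.image t).card :=
      Finset.card_erase_add_one (Finset.mem_image_of_mem _ (Finset.mem_univ _))
    rw [h1]; exact Finset.card_image_le
  have hdeg : Q.natDegree = T.card := by
    rw [hQ, Polynomial.natDegree_prod_of_monic _ _ (fun y _ => Polynomial.monic_X_sub_C y)]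
    simp
  have hQe : ∀ x, Q.eval x = ∑ j ∈ Finset.range d, Q.coeff j * x ^ j := fun x =>
    Polynomial.eval_eq_sum_range' (by omega) x
  have h0 : ∑ i, t i * Q.eval (t i) = 0 := by
    simp_rw [hQe, Finset.mul_sum]
    rw [Finset.sum_comm]
    apply Finset.sum_eq_zero
    intro j hj
    have := hsum ⟨j, Finset.mem_range.1 hj⟩
    simp only at this
    calc _ = Q.coeff j * ∑ i, t i ^ (j + 1) := by
          rw [Finset.mul_sum]; exact Finset.sum_congr rfl (fun i _ => by ring)
      _ = 0 := by rw [this, mul_zero]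
  have h1 : ∀ i, t i * Q.eval (t i) = if t i = t i0 then t i0 * Q.eval (t i0) else 0 := by
    intro i
    split_ifs with h
    · rw [h]
    · have : Q.eval (t i) = 0 := by
        rw [hQ, Polynomial.eval_prod]
        apply Finset.prod_eq_zero (i := t i)
        · exact Finset.mem_erase.2 ⟨h, Finset.mem_image_of_mem _ (Finset.mem_univ _)⟩
        · simp
      rw [this, mul_zero]
  rw [Finset.sum_congr rfl (fun i _ => h1 i)] at h0
  rw [← Finset.sum_filter, Finset.sum_const, nsmul_eq_mul] at h0
  rcases mul_eq_zero.1 h0 with h | h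
  · rw [ZMod.natCast_eq_zero_iff] at h
    have hpos : 0 < (Finset.univ.filter (fun i => t i = t i0)).card :=
      Finset.card_pos.2 ⟨i0, by simp⟩
    have := Nat.le_of_dvd hpos h
    have h3 : (Finset.univ.filter (fun i => t i = t i0)).card ≤ Fintype.card ι :=
      Finset.card_le_univ _
    omega
  · rcases mul_eq_zero.1 h with h | h
    · exact ht _ h
    · rw [hQ, Polynomial.eval_prod, Finset.prod_eq_zero_iff] at h
      obtain ⟨y, hy, h⟩ := h
      simp [sub_eq_zero] at h
      exact (Finset.mem_erase.1 hy).1 h.symm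

open Polynomial in
lemma diff_natDegree {p : ℕ} [Fact p.Prime] (f : (ZMod p)[X]) (e : ℕ) (he : f.natDegree = e + 1)
    (hep : e + 1 < p) (h : ZMod p) (hh : h ≠ 0) : (taylor h f - f).natDegree = e := by
  have hc : ((e + 1 : ℕ) : ZMod p) ≠ 0 := by
    rw [Ne, ZMod.natCast_eq_zero_iff]
    intro hd
    have := Nat.le_of_dvd (by omega) hd
    omega
  have hf : f.coeff (e + 1) ≠ 0 := by
    rw [← he]; exact leadingCoeff_ne_zero.2 (by rintro rfl; simp at he)
  apply natDegree_eq_of_le_of_coeff_ne_zero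
  · rw [natDegree_le_iff_coeff_eq_zero]
    intro N hN
    rcases Nat.lt_or_ge (e + 1) N with h1 | h1
    · rw [coeff_sub, coeff_eq_zero_of_natDegree_lt, coeff_eq_zero_of_natDegree_lt, sub_zero]
      · omega
      · rw [natDegree_taylor]; omega
    · have : N = f.natDegree := by omega
      subst this
      rw [coeff_sub, coeff_taylor_natDegree, sub_eq_zero]; rfl
  · have hdeg : (hasseDeriv e f).natDegree ≤ 1 := by
      refine (natDegree_hasseDeriv_le _ _).trans (by omega)
    rw [coeff_sub, taylor_coeff, eval_eq_sum_range' (n := 2) (by omega)]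
    simp [Finset.sum_range_succ, hasseDeriv_coeff]
    rw [add_comm 1 e, Nat.choose_succ_self_right]
    exact ⟨⟨hc, hf⟩, hh⟩

open Polynomial in
lemma weyl_sq {p : ℕ} [Fact p.Prime] (f : (ZMod p)[X]) :
    ((‖∑ x, ZMod.stdAddChar (f.eval x)‖ ^ 2 : ℝ) : ℂ) =
      ∑ h : ZMod p, ∑ x, ZMod.stdAddChar ((taylor h f - f).eval x) := by
  rw [Complex.ofReal_pow, ← Complex.mul_conj', map_sum, Finset.sum_mul_sum, Finset.sum_comm]
  rw [Finset.sum_comm (f := fun h x => (ZMod.stdAddChar ((taylor h f - f).eval x) : ℂ))]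
  refine Finset.sum_congr rfl fun x _ => ?_
  rw [← Equiv.sum_comp (Equiv.addLeft x)]
  refine Finset.sum_congr rfl fun h _ => ?_
  rw [← AddChar.map_neg_eq_conj, ← AddChar.map_add_eq_mul, eval_sub, taylor_eval]
  simp [sub_eq_add_neg, add_comm]

open Polynomial in
lemma weyl (e : ℕ) : ∀ ε : ℝ, 0 < ε → ∃ P : ℕ, ∀ p : ℕ, ∀ _ : Fact p.Prime, P ≤ p →
    ∀ f : (ZMod p)[X], f.natDegree = e + 1 → ‖∑ x, ZMod.stdAddChar (f.eval x)‖ ≤ ε * p := by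
  induction e with
  | zero =>
    intro ε hε
    refine ⟨0, fun p _ _ f hf => ?_⟩
    obtain ⟨a, b, rfl⟩ := exists_eq_X_add_C_of_natDegree_le_one (le_of_eq hf)
    have ha : a ≠ 0 := by rintro rfl; simp at hf
    have h1 := AddChar.sum_mulShift (R := ZMod p) a (ZMod.isPrimitive_stdAddChar p)
    rw [if_neg ha] at h1
    have : ∑ x, ZMod.stdAddChar ((C a * X + C b).eval x) = (0 : ℂ) := by
      simp only [eval_add, eval_mul, eval_C, eval_X, AddChar.map_add_eq_mul]
      rw [← Finset.sum_mul]
      simp_rw [mul_comm a]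
      rw [h1]; simp
    rw [this, norm_zero]; positivity
  | succ e ih =>
    intro ε hε
    obtain ⟨P, hP⟩ := ih (ε ^ 2 / 2) (by positivity)
    obtain ⟨M, hM⟩ := exists_nat_gt (2 / ε ^ 2)
    refine ⟨max P (max M (e + 3)), fun p _ hp f hf => ?_⟩
    have hp1 : P ≤ p := le_trans (le_max_left _ _) hp
    have hp2 : M ≤ p := le_trans (le_trans (le_max_left _ _) (le_max_right _ _)) hp
    have hp3 : e + 3 ≤ p := le_trans (le_trans (le_max_right _ _) (le_max_right _ _)) hp
    have hpM : 2 / ε ^ 2 < p := lt_of_lt_of_le hM (by exact_mod_cast hp2)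
    have hp0 : (0 : ℝ) < p := by exact_mod_cast (by omega : 0 < p)
    rw [div_lt_iff₀ (by positivity)] at hpM
    have hsq := weyl_sq f
    have key : ‖∑ x, (ZMod.stdAddChar (f.eval x) : ℂ)‖ ^ 2 ≤ (ε * p) ^ 2 := by
      calc ‖∑ x, (ZMod.stdAddChar (f.eval x) : ℂ)‖ ^ 2
          = ‖((‖∑ x, (ZMod.stdAddChar (f.eval x) : ℂ)‖ ^ 2 : ℝ) : ℂ)‖ := by
            rw [Complex.norm_real, Real.norm_of_nonneg (by positivity)]
        _ ≤ ∑ h : ZMod p, ‖∑ x, (ZMod.stdAddChar ((taylor h f - f).eval x) : ℂ)‖ := by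
            rw [hsq]; exact norm_sum_le _ _
        _ ≤ ∑ h : ZMod p, ((if h = 0 then (p : ℝ) else 0) + ε ^ 2 / 2 * p) := by
            refine Finset.sum_le_sum fun h _ => ?_
            split_ifs with hh
            · subst hh
              simp
              positivity
            · rw [zero_add]
              exact hP p _ hp1 _ (diff_natDegree f (e + 1) hf (by omega) h hh)
        _ = p + p * (ε ^ 2 / 2 * p) := by
            rw [Finset.sum_add_distrib]; simp
        _ ≤ (ε * p) ^ 2 := by nlinarith
    exact le_of_sq_le_sq key (by positivity) 


/-- The moment curve. -/
def momentCurve (p d : ℕ) (t : ZMod p) : Fin d → ZMod p := fun i => t ^ ((i : ℕ) + 1)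

/-- Character attached to a dot product. -/
noncomputable def dotChar {p d : ℕ} [NeZero p] (c : Fin d → ZMod p) :
    AddChar (Fin d → ZMod p) ℂ where
  toFun x := ZMod.stdAddChar (c ⬝ᵥ x)
  map_zero_eq_one' := by simp
  map_add_eq_mul' x y := by rw [dotProduct_add, AddChar.map_add_eq_mul]

lemma dotChar_apply {p d : ℕ} [NeZero p] (c x : Fin d → ZMod p) :
    dotChar c x = ZMod.stdAddChar (c ⬝ᵥ x) := rfl

lemma dotChar_comm {p d : ℕ} [NeZero p] (c x : Fin d → ZMod p) :
    dotChar c x = dotChar x c := by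
  rw [dotChar_apply, dotChar_apply, dotProduct_comm]

lemma dotChar_sum {p d : ℕ} [NeZero p] (z : Fin d → ZMod p) :
    ∑ c, dotChar c z = if z = 0 then ((p : ℂ) ^ d) else 0 := by
  classical
  simp_rw [dotChar_comm _ z]
  rw [AddChar.sum_eq_ite]
  have : dotChar z = 0 ↔ z = 0 := by
    constructor
    · intro h
      funext i
      have h1 : dotChar z (Pi.single i 1) = 1 := by rw [h]; rfl
      rw [dotChar_apply, dotProduct_single, mul_one] at h1
      exact (ZMod.injective_stdAddChar (h1.trans (AddChar.map_zero_eq_one _).symm))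
    · rintro rfl
      ext x
      simp [dotChar_apply]
  simp [this]

lemma parseval {p d : ℕ} [NeZero p] (A : Finset (Fin d → ZMod p)) :
    ∑ c, ‖∑ x ∈ A, dotChar c x‖ ^ 2 = (p : ℝ) ^ d * A.card := by
  have : ((∑ c, ‖∑ x ∈ A, dotChar c x‖ ^ 2 : ℝ) : ℂ) = (((p : ℝ) ^ d * A.card : ℝ) : ℂ) := by
    rw [Complex.ofReal_sum]
    have : ∀ c, ((‖∑ x ∈ A, dotChar c x‖ ^ 2 : ℝ) : ℂ)
        = ∑ x ∈ A, ∑ y ∈ A, dotChar c (x - y) := by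
      intro c
      rw [Complex.ofReal_pow, ← Complex.mul_conj', map_sum, Finset.sum_mul_sum]
      refine Finset.sum_congr rfl fun x _ => Finset.sum_congr rfl fun y _ => ?_
      rw [← AddChar.map_neg_eq_conj, ← AddChar.map_add_eq_mul, sub_eq_add_neg]
    simp_rw [this]
    rw [Finset.sum_comm]
    have h2 : ∀ x ∈ A, ∑ c, ∑ y ∈ A, dotChar c (x - y) = (p : ℂ) ^ d := by
      intro x hx
      rw [Finset.sum_comm]
      simp_rw [dotChar_sum, sub_eq_zero]
      rw [Finset.sum_ite_eq, if_pos hx]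
    rw [Finset.sum_congr rfl h2]
    simp [mul_comm]
  exact_mod_cast this

/-- Number of pairs `(t, x)` with `x ∈ A` and `x + γ(t) ∈ B`. -/
def curveCount {p d : ℕ} [NeZero p] (A B : Finset (Fin d → ZMod p)) : ℕ :=
  ∑ t : ZMod p, (A.filter (fun x => x + momentCurve p d t ∈ B)).card

lemma curveCount_fourier {p d : ℕ} [NeZero p] (A B : Finset (Fin d → ZMod p)) :
    ∑ c : Fin d → ZMod p, (∑ t, dotChar c (momentCurve p d t)) * (∑ x ∈ A, dotChar c x)
      * (starRingEnd ℂ) (∑ y ∈ B, dotChar c y) = (p : ℂ) ^ d * curveCount A B := by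
  have h1 : ∀ c : Fin d → ZMod p, (∑ t, dotChar c (momentCurve p d t)) * (∑ x ∈ A, dotChar c x)
      * (starRingEnd ℂ) (∑ y ∈ B, dotChar c y)
      = ∑ t, ∑ x ∈ A, ∑ y ∈ B, dotChar c (x + momentCurve p d t - y) := by
    intro c
    rw [map_sum, Finset.sum_mul_sum, Finset.sum_mul]
    refine Finset.sum_congr rfl fun t _ => ?_
    rw [Finset.sum_mul_sum]
    refine Finset.sum_congr rfl fun x _ => Finset.sum_congr rfl fun y _ => ?_
    rw [← AddChar.map_neg_eq_conj, ← AddChar.map_add_eq_mul, ← AddChar.map_add_eq_mul,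
      sub_eq_add_neg, add_comm x]
  simp_rw [h1]
  rw [Finset.sum_comm, curveCount, Nat.cast_sum, Finset.mul_sum]
  refine Finset.sum_congr rfl fun t _ => ?_
  rw [Finset.sum_comm, Finset.card_filter, Nat.cast_sum, Finset.mul_sum]
  refine Finset.sum_congr rfl fun x _ => ?_
  rw [Finset.sum_comm]
  simp_rw [dotChar_sum, sub_eq_zero]
  rw [Finset.sum_ite_eq]
  split_ifs <;> simp

lemma mixing {p d : ℕ} [NeZero p] (ε : ℝ) (hε : 0 ≤ ε)
    (hS : ∀ c : Fin d → ZMod p, c ≠ 0 → ‖∑ t, dotChar c (momentCurve p d t)‖ ≤ ε * p)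
    (A B : Finset (Fin d → ZMod p)) :
    |(p : ℝ) ^ d * curveCount A B - p * A.card * B.card|
      ≤ ε * p * ((p : ℝ) ^ d * (A.card + B.card) / 2) := by
  have h := curveCount_fourier A B
  rw [← Finset.add_sum_erase _ _ (Finset.mem_univ (0 : Fin d → ZMod p))] at h
  have h0 : ∀ x : Fin d → ZMod p, dotChar 0 x = 1 := fun x => by simp [dotChar_apply]
  simp only [h0] at h
  have h1 : (((p : ℝ) ^ d * curveCount A B - p * A.card * B.card : ℝ) : ℂ) =
      ∑ c ∈ Finset.univ.erase (0 : Fin d → ZMod p),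
        (∑ t, dotChar c (momentCurve p d t)) * (∑ x ∈ A, dotChar c x)
      * (starRingEnd ℂ) (∑ y ∈ B, dotChar c y) := by
    push_cast
    rw [← h]
    simp
  rw [← Real.norm_eq_abs, ← Complex.norm_real, h1]
  calc _ ≤ ∑ c ∈ Finset.univ.erase (0 : Fin d → ZMod p),
        ‖(∑ t, dotChar c (momentCurve p d t)) * (∑ x ∈ A, dotChar c x)
          * (starRingEnd ℂ) (∑ y ∈ B, dotChar c y)‖ := norm_sum_le _ _
    _ ≤ ∑ c ∈ Finset.univ.erase (0 : Fin d → ZMod p),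
        ε * p * ((‖∑ x ∈ A, dotChar c x‖ ^ 2 + ‖∑ x ∈ B, dotChar c x‖ ^ 2) / 2) := by
        refine Finset.sum_le_sum fun c hc => ?_
        rw [norm_mul, norm_mul, RCLike.norm_conj, mul_assoc]
        refine mul_le_mul (hS c (Finset.mem_erase.1 hc).1) ?_ (by positivity) (by positivity)
        nlinarith [sq_nonneg (‖∑ x ∈ A, dotChar c x‖ - ‖∑ x ∈ B, dotChar c x‖)]
    _ ≤ ∑ c : Fin d → ZMod p,
        ε * p * ((‖∑ x ∈ A, dotChar c x‖ ^ 2 + ‖∑ x ∈ B, dotChar c x‖ ^ 2) / 2) :=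
        Finset.sum_le_sum_of_subset_of_nonneg (Finset.erase_subset _ _)
          (fun c _ _ => by positivity)
    _ = _ := by
        rw [← Finset.mul_sum, ← Finset.sum_div, Finset.sum_add_distrib, parseval, parseval]
        ring

open Polynomial in
lemma curve_sum_le (d : ℕ) (ε : ℝ) (hε : 0 < ε) : ∃ P : ℕ, ∀ p : ℕ, ∀ _ : Fact p.Prime, P ≤ p →
    ∀ c : Fin d → ZMod p, c ≠ 0 → ‖∑ t, dotChar c (momentCurve p d t)‖ ≤ ε * p := by
  choose P hP using fun e => weyl e ε hε
  refine ⟨∑ e ∈ Finset.range d, P e, fun p _ hp c hc => ?_⟩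
  set f : (ZMod p)[X] := ∑ i : Fin d, C (c i) * X ^ ((i : ℕ) + 1) with hf
  have he : ∀ t, dotChar c (momentCurve p d t) = ZMod.stdAddChar (f.eval t) := by
    intro t
    rw [dotChar_apply, hf, eval_finsetSum]
    simp [dotProduct, momentCurve]
  have hcoeff : ∀ i : Fin d, f.coeff ((i : ℕ) + 1) = c i := by
    intro i
    rw [hf, finsetSum_coeff]
    simp only [coeff_C_mul_X_pow]
    rw [Finset.sum_eq_single i]
    · simp
    · intro j _ hj
      rw [if_neg]
      intro h
      exact hj (Fin.ext (by omega))
    · simp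
  have hdeg : f.natDegree ≤ d := by
    rw [hf]
    refine natDegree_sum_le_of_forall_le _ _ fun i _ => ?_
    exact (natDegree_C_mul_X_pow_le _ _).trans (by omega)
  obtain ⟨i, hi⟩ := Function.ne_iff.1 hc
  have hle : (i : ℕ) + 1 ≤ f.natDegree := le_natDegree_of_ne_zero (by rw [hcoeff]; exact hi)
  simp_rw [he]
  refine hP (f.natDegree - 1) p _ (le_trans ?_ hp) f (by omega)
  exact Finset.single_le_sum (f := P) (fun _ _ => Nat.zero_le _) (Finset.mem_range.2 (by omega))

lemma exists_host (ℓ : ℕ) (δ : ℝ) (hδ : 0 < δ) (hδ1 : δ ≤ 1 / 2) :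
    ∃ (X : Type) (_ : Fintype X) (_ : Nonempty X) (R : X → X → Prop),
      (∀ m : ℕ, 0 < m → m < ℓ → ¬ ∃ c : ZMod m → X, ∀ i, R (c i) (c (i + 1))) ∧
      (∀ A B : Finset X, δ * Fintype.card X ≤ A.card → δ * Fintype.card X ≤ B.card →
        ∃ x ∈ A, ∃ y ∈ B, R x y) ∧
      (∀ B : Finset X, (B.card : ℝ) ≤ Fintype.card X / 2 →
        (∀ x ∈ B, (∀ y, R x y → y ∈ B) ∨ (∀ y, R y x → y ∈ B)) → B = ∅) := by
  classical
  obtain ⟨P, hP⟩ := curve_sum_le ℓ (δ ^ 2 / 2) (by positivity)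
  obtain ⟨M, hM⟩ := exists_nat_gt (2 / δ ^ 2)
  obtain ⟨p, hp, hpp⟩ := Nat.exists_infinite_primes (max P (max M (ℓ + 1)))
  have hp1 : P ≤ p := le_trans (le_max_left _ _) hp
  have hp2 : M ≤ p := le_trans (le_trans (le_max_left _ _) (le_max_right _ _)) hp
  have hp3 : ℓ + 1 ≤ p := le_trans (le_trans (le_max_right _ _) (le_max_right _ _)) hp
  have hfact : Fact p.Prime := ⟨hpp⟩
  have hpM : 2 / δ ^ 2 < p := lt_of_lt_of_le hM (by exact_mod_cast hp2)
  rw [div_lt_iff₀ (by positivity)] at hpM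
  have hp0 : (0 : ℝ) < p := by exact_mod_cast hpp.pos
  have hmix := mixing (p := p) (d := ℓ) (δ ^ 2 / 2) (by positivity) (hP p hfact hp1)
  have hcard : (Fintype.card (Fin ℓ → ZMod p) : ℝ) = (p : ℝ) ^ ℓ := by simp
  have hN : (0 : ℝ) < (p : ℝ) ^ ℓ := by positivity
  refine ⟨Fin ℓ → ZMod p, inferInstance, inferInstance,
    fun x y => ∃ t : ZMod p, t ≠ 0 ∧ y = x + momentCurve p ℓ t, ?_, ?_, ?_⟩
  · rintro m hm hml ⟨c, hc⟩
    have : NeZero m := ⟨hm.ne'⟩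
    choose t ht hct using hc
    refine power_sums_ne (p := p) (ι := ZMod m) (d := ℓ) ?_ ?_ t ht ?_
    · rw [ZMod.card]; omega
    · rw [ZMod.card]; omega
    · intro j
      have h1 : ∀ i, t i ^ ((j : ℕ) + 1) = c (i + 1) j - c i j := by
        intro i
        rw [hct i]; simp [momentCurve]
      simp_rw [h1]
      rw [Finset.sum_sub_distrib, sub_eq_zero]
      exact Equiv.sum_comp (Equiv.addRight (1 : ZMod m)) (fun i => c i j)
  · intro A B hA hB
    rw [hcard] at hA hB
    by_contra hno
    push Not at hno
    have hle : curveCount A B ≤ A.card := by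
      rw [curveCount, Finset.sum_eq_single (0 : ZMod p)]
      · exact Finset.card_filter_le _ _
      · intro t _ ht
        rw [Finset.card_eq_zero, Finset.filter_eq_empty_iff]
        intro x hx hxB
        exact hno x hx _ hxB t ht rfl
      · simp
    have hle' : (curveCount A B : ℝ) ≤ A.card := by exact_mod_cast hle
    have hAN : (A.card : ℝ) ≤ (p : ℝ) ^ ℓ := by
      rw [← hcard]; exact_mod_cast Finset.card_le_univ A
    have hBN : (B.card : ℝ) ≤ (p : ℝ) ^ ℓ := by
      rw [← hcard]; exact_mod_cast Finset.card_le_univ B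
    have h := (abs_le.1 (hmix A B)).1
    generalize (p : ℝ) ^ ℓ = N at *
    generalize (A.card : ℝ) = a at *
    generalize (B.card : ℝ) = b at *
    generalize (curveCount A B : ℝ) = e at *
    have h1 : (δ * N) * (δ * N) ≤ a * b := mul_le_mul hA hB (by positivity) (by linarith [mul_pos hδ hN])
    have h2 : N * e ≤ N * N := mul_le_mul_of_nonneg_left (by linarith) hN.le
    have h3 : p * ((δ * N) * (δ * N)) ≤ p * (a * b) := mul_le_mul_of_nonneg_left h1 hp0.le
    have h4 : δ ^ 2 / 2 * p * (N * (a + b) / 2) ≤ δ ^ 2 / 2 * p * (N * N) :=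
      mul_le_mul_of_nonneg_left (by nlinarith) (by positivity)
    have h5 : 2 * (N * N) < p * δ ^ 2 * (N * N) := mul_lt_mul_of_pos_right hpM (by positivity)
    nlinarith
  · intro B hB hcl
    rw [hcard] at hB
    by_contra hne
    have hBpos : (0 : ℝ) < B.card := by
      exact_mod_cast Finset.card_pos.2 (Finset.nonempty_iff_ne_empty.2 hne)
    set B1 := B.filter (fun x => ∀ t, x + momentCurve p ℓ t ∈ B) with hB1
    set B2 := B.filter (fun x => ∀ t, x - momentCurve p ℓ t ∈ B) with hB2
    have hz : momentCurve p ℓ 0 = 0 := by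
      funext i; simp [momentCurve]
    have hun : B ⊆ B1 ∪ B2 := by
      intro x hx
      rcases hcl x hx with h | h
      · refine Finset.mem_union_left _ (Finset.mem_filter.2 ⟨hx, fun t => ?_⟩)
        by_cases ht : t = 0
        · rw [ht, hz, add_zero]; exact hx
        · exact h _ ⟨t, ht, rfl⟩
      · refine Finset.mem_union_right _ (Finset.mem_filter.2 ⟨hx, fun t => ?_⟩)
        by_cases ht : t = 0
        · rw [ht, hz, sub_zero]; exact hx
        · exact h _ ⟨t, ht, by simp⟩
    have hsum : (B.card : ℝ) ≤ B1.card + B2.card := by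
      exact_mod_cast (Finset.card_le_card hun).trans (Finset.card_union_le _ _)
    have e1 : (curveCount B1 B : ℝ) = p * B1.card := by
      have : curveCount B1 B = p * B1.card := by
        rw [curveCount, Finset.sum_congr rfl (g := fun _ => B1.card)]
        · simp [ZMod.card]
        · intro t _
          rw [Finset.filter_true_of_mem]
          intro x hx
          exact (Finset.mem_filter.1 hx).2 t
      exact_mod_cast this
    have e2 : (curveCount B B2 : ℝ) = p * B2.card := by
      have : curveCount B B2 = p * B2.card := by
        rw [curveCount, Finset.sum_congr rfl (g := fun _ => B2.card)]
        · simp [ZMod.card]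
        · intro t _
          refine Finset.card_bij (fun x _ => x + momentCurve p ℓ t) ?_ ?_ ?_
          · intro x hx; exact (Finset.mem_filter.1 hx).2
          · intro x _ y _ h; exact add_right_cancel h
          · intro y hy
            exact ⟨y - momentCurve p ℓ t, Finset.mem_filter.2
              ⟨(Finset.mem_filter.1 hy).2 t, by simpa using hy⟩, by simp⟩
      exact_mod_cast this
    have m1 := (abs_le.1 (hmix B1 B)).2
    have m2 := (abs_le.1 (hmix B B2)).2
    rw [e1] at m1
    rw [e2] at m2
    have hs1 : (B1.card : ℝ) ≤ B.card := by exact_mod_cast Finset.card_filter_le _ _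
    have hs2 : (B2.card : ℝ) ≤ B.card := by exact_mod_cast Finset.card_filter_le _ _
    have hn1 : (0 : ℝ) ≤ B1.card := by positivity
    have hn2 : (0 : ℝ) ≤ B2.card := by positivity
    clear_value B1 B2
    generalize (p : ℝ) ^ ℓ = N at *
    generalize (B.card : ℝ) = b at *
    generalize (B1.card : ℝ) = b1 at *
    generalize (B2.card : ℝ) = b2 at *
    have hδ2 : δ ^ 2 / 2 ≤ 1 / 8 := by nlinarith
    have k : (N * (p * b1) - p * b1 * b) + (N * (p * b2) - p * b * b2) ≤ δ ^ 2 / 2 * (p * N * (2 * b)) := by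
      have : δ ^ 2 / 2 * (p * N) * (b1 + b2) ≤ δ ^ 2 / 2 * (p * N) * (2 * b) :=
        mul_le_mul_of_nonneg_left (by linarith) (by positivity)
      nlinarith
    have k2 : δ ^ 2 / 2 * (p * N * (2 * b)) ≤ 1 / 8 * (p * N * (2 * b)) :=
      mul_le_mul_of_nonneg_right hδ2 (by positivity)
    have k3 : (p * (b1 + b2)) * (N / 2) ≤ (p * (b1 + b2)) * (N - b) :=
      mul_le_mul_of_nonneg_left (by linarith) (by positivity)
    have k4 : (p * N / 2) * b ≤ (p * N / 2) * (b1 + b2) :=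
      mul_le_mul_of_nonneg_left hsum (by positivity)
    have k5 : 0 < p * N * b := by positivity
    nlinarith

/-- Core argument: a colouring of `D × H` yields a homomorphism, and it is constant on fibres in
the pointed case. -/
lemma colouring_factor {V : Type} [Fintype V] (D : OrientedGraph V) (k : ℕ) (hk : 0 < k)
    (X : Type) [Fintype X] [Nonempty X] (R : X → X → Prop) (δ : ℝ)
    (hδ : δ = 1 / (2 * ((k : ℝ) ^ Fintype.card V + Fintype.card V * k)))
    (h2 : ∀ A B : Finset X, δ * Fintype.card X ≤ A.card → δ * Fintype.card X ≤ B.card →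
        ∃ x ∈ A, ∃ y ∈ B, R x y)
    (h3 : ∀ B : Finset X, (B.card : ℝ) ≤ Fintype.card X / 2 →
        (∀ x ∈ B, (∀ y, R x y → y ∈ B) ∨ (∀ y, R y x → y ∈ B)) → B = ∅)
    (W : Type) [Fintype W] (C : OrientedGraph W) (hW : Fintype.card W ≤ k)
    (φ : V × X → W)
    (hφ : ∀ u v x y, D.Adj u v → R x y → C.Adj (φ (u, x)) (φ (v, y))) :
    ∃ f : V → W, IsHom D C f ∧ (IsPointedOf C D → ∀ v x, φ (v, x) = f v) := by
  classical
  have hk0 : (1 : ℝ) ≤ k := by exact_mod_cast hk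
  have hX : (0 : ℝ) < Fintype.card X := by exact_mod_cast Fintype.card_pos
  have hK : (1 : ℝ) ≤ (k : ℝ) ^ Fintype.card V := one_le_pow₀ hk0
  have hden : (0 : ℝ) < 2 * ((k : ℝ) ^ Fintype.card V + Fintype.card V * k) := by positivity
  have hδ0 : 0 < δ := by rw [hδ]; positivity
  have hδK : (k : ℝ) ^ Fintype.card V * δ ≤ 1 := by
    rw [hδ, mul_one_div, div_le_one hden]
    have : (0 : ℝ) ≤ Fintype.card V * k := by positivity
    linarith
  have hδV : (Fintype.card V * k : ℝ) * δ ≤ 1 / 2 := by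
    rw [hδ, mul_one_div, div_le_iff₀ hden]
    linarith
  set F : X → V → W := fun x v => φ (v, x) with hF
  have : Nonempty (V → W) := ⟨F (Classical.arbitrary X)⟩
  obtain ⟨f, hf⟩ := Fintype.exists_le_card_fiber_of_nsmul_le_card F (b := δ * Fintype.card X) (by
    rw [nsmul_eq_mul, ← mul_assoc]
    have h1 : (Fintype.card (V → W) : ℝ) ≤ (k : ℝ) ^ Fintype.card V := by
      rw [Fintype.card_fun]
      push_cast
      exact pow_le_pow_left₀ (by positivity) (by exact_mod_cast hW) _
    have h4 : (Fintype.card (V → W) : ℝ) * δ ≤ 1 :=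
      (mul_le_mul_of_nonneg_right h1 hδ0.le).trans hδK
    nlinarith)
  set A : Finset X := Finset.univ.filter (fun x => F x = f) with hA
  have hAf : ∀ x ∈ A, ∀ v, φ (v, x) = f v := by
    intro x hx v
    exact congrFun (Finset.mem_filter.1 hx).2 v
  have hfhom : IsHom D C f := by
    intro u v huv
    obtain ⟨x, hx, y, hy, hxy⟩ := h2 A A hf hf
    have := hφ u v x y huv hxy
    rwa [hAf x hx, hAf y hy] at this
  refine ⟨f, hfhom, fun hpt => ?_⟩
  -- single vertex recolouring
  have hupd : ∀ v c, (∀ u, D.Adj u v → C.Adj (f u) c) → (∀ u, D.Adj v u → C.Adj c (f u)) →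
      c = f v := by
    intro v c hin hout
    by_contra hne
    refine hpt ⟨f, Function.update f v c, hfhom, ?_, ?_, v, ?_⟩
    · intro a b hab
      by_cases ha : a = v
      · have hb : b ≠ v := by
          rintro rfl; rw [ha] at hab; exact D.irrefl _ hab
        rw [ha, Function.update_self, Function.update_of_ne hb]
        rw [ha] at hab
        exact hout b hab
      · by_cases hb : b = v
        · rw [hb, Function.update_self, Function.update_of_ne ha]
          rw [hb] at hab
          exact hin a hab
        · rw [Function.update_of_ne ha, Function.update_of_ne hb]
          exact hfhom hab
    · intro h
      have := congrFun h v
      rw [Function.update_self] at this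
      exact hne this.symm
    · intro u hu
      rw [Function.update_of_ne hu]
  have hsmall : ∀ v c, c ≠ f v →
      ((Finset.univ.filter (fun x => φ (v, x) = c)).card : ℝ) ≤ δ * Fintype.card X := by
    intro v c hc
    by_contra hlt
    push Not at hlt
    refine hc (hupd v c ?_ ?_)
    · intro u hu
      obtain ⟨x, hx, y, hy, hxy⟩ := h2 A _ hf hlt.le
      have := hφ u v x y hu hxy
      rwa [hAf x hx, (Finset.mem_filter.1 hy).2] at this
    · intro u hu
      obtain ⟨x, hx, y, hy, hxy⟩ := h2 _ A hlt.le hf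
      have := hφ v u x y hu hxy
      rwa [hAf y hy, (Finset.mem_filter.1 hx).2] at this
  set B : Finset X := Finset.univ.filter (fun x => ∃ v, φ (v, x) ≠ f v) with hB
  have hBsub : B ⊆ Finset.univ.biUnion (fun v : V => (Finset.univ.erase (f v)).biUnion
      (fun c => Finset.univ.filter (fun x => φ (v, x) = c))) := by
    intro x hx
    obtain ⟨v, hv⟩ := (Finset.mem_filter.1 hx).2
    simp only [Finset.mem_biUnion, Finset.mem_univ, true_and, Finset.mem_filter,
      Finset.mem_erase, and_true]
    exact ⟨v, _, hv, rfl⟩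
  have hBcard : (B.card : ℝ) ≤ Fintype.card X / 2 := by
    have s1 : (B.card : ℝ) ≤ ∑ v : V, ∑ c ∈ Finset.univ.erase (f v),
        ((Finset.univ.filter (fun x => φ (v, x) = c)).card : ℝ) := by
      have := (Finset.card_le_card hBsub).trans (Finset.card_biUnion_le.trans
        (Finset.sum_le_sum fun v _ => Finset.card_biUnion_le))
      exact_mod_cast this
    have s2 : ∀ v : V, ∑ c ∈ Finset.univ.erase (f v),
        ((Finset.univ.filter (fun x => φ (v, x) = c)).card : ℝ) ≤ k * (δ * Fintype.card X) := by
      intro v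
      refine (Finset.sum_le_card_nsmul _ _ _ fun c hc =>
        hsmall v c (Finset.mem_erase.1 hc).1).trans ?_
      rw [nsmul_eq_mul]
      refine mul_le_mul_of_nonneg_right ?_ (by positivity)
      exact_mod_cast (Finset.card_le_univ _).trans hW
    have s3 := s1.trans (Finset.sum_le_sum fun v _ => s2 v)
    rw [Finset.sum_const, nsmul_eq_mul, Finset.card_univ] at s3
    nlinarith
  have hBe : B = ∅ := by
    refine h3 B hBcard fun x hx => ?_
    by_contra hno
    push Not at hno
    obtain ⟨⟨y, hxy, hy⟩, z, hzx, hz⟩ := hno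
    obtain ⟨v, hv⟩ := (Finset.mem_filter.1 hx).2
    have hy' : ∀ u, φ (u, y) = f u := by
      intro u; by_contra h; exact hy (Finset.mem_filter.2 ⟨Finset.mem_univ _, u, h⟩)
    have hz' : ∀ u, φ (u, z) = f u := by
      intro u; by_contra h; exact hz (Finset.mem_filter.2 ⟨Finset.mem_univ _, u, h⟩)
    refine hv (hupd v _ ?_ ?_)
    · intro u hu
      have := hφ u v z x hu hzx
      rwa [hz'] at this
    · intro u hu
      have := hφ v u x y hu hxy
      rwa [hy'] at this
  intro v x
  by_contra h
  have : x ∈ B := Finset.mem_filter.2 ⟨Finset.mem_univ _, v, h⟩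
  rw [hBe] at this
  simp at this

/-- **Theorem 1 (main result).** For every finite oriented graph `D` and positive integers
`k`, `ℓ`, there is a finite oriented graph `D*` and a surjective homomorphism
`ψ : V(D*) → V(D)` such that (i) `D*` has girth at least `ℓ`; (ii) for every oriented
graph `C` on at most `k` vertices, `D*` is `C`-colourable iff `D` is; and (iii) for every
`D`-pointed oriented graph `C` on at most `k` vertices and every homomorphism
`φ : V(D*) → V(C)` there is a unique homomorphism `f : V(D) → V(C)` with `φ = f ∘ ψ`. -/
theorem oriented_sparse_incomparability {V : Type} [Fintype V] (D : OrientedGraph V)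
    (k ℓ : ℕ) (hk : 0 < k) (hℓ : 0 < ℓ) :
    ∃ (m : ℕ) (Dstar : OrientedGraph (Fin m)) (ψ : Fin m → V),
      Function.Surjective ψ ∧ IsHom Dstar D ψ ∧
      GirthAtLeast Dstar ℓ ∧
      (∀ (W : Type) (_ : Fintype W) (C : OrientedGraph W), Fintype.card W ≤ k →
        ((∃ φ : Fin m → W, IsHom Dstar C φ) ↔ (∃ f : V → W, IsHom D C f))) ∧
      (∀ (W : Type) (_ : Fintype W) (C : OrientedGraph W), Fintype.card W ≤ k →
        IsPointedOf C D →
        ∀ φ : Fin m → W, IsHom Dstar C φ →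
          ∃! f : V → W, IsHom D C f ∧ φ = f ∘ ψ) := by
  classical
  obtain ⟨δ, hδ⟩ : ∃ δ : ℝ, δ = 1 / (2 * ((k : ℝ) ^ Fintype.card V + Fintype.card V * k)) :=
    ⟨_, rfl⟩
  have hk0 : (1 : ℝ) ≤ k := by exact_mod_cast hk
  have hK : (1 : ℝ) ≤ (k : ℝ) ^ Fintype.card V := one_le_pow₀ hk0
  have hnn : (0 : ℝ) ≤ Fintype.card V * k := by positivity
  have hδ0 : 0 < δ := by rw [hδ]; positivity
  have hδ1 : δ ≤ 1 / 2 := by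
    rw [hδ]
    exact one_div_le_one_div_of_le (by norm_num) (by linarith)
  obtain ⟨X, _, _, R, h1, h2, h3⟩ := exists_host ℓ δ hδ0 hδ1
  let e : Fin (Fintype.card (V × X)) ≃ V × X := (Fintype.equivFin (V × X)).symm
  have hsurj : Function.Surjective (fun i => (e i).1) := by
    intro v
    exact ⟨e.symm (v, Classical.arbitrary X), by simp⟩
  have key : ∀ (W : Type) (_ : Fintype W) (C : OrientedGraph W), Fintype.card W ≤ k →
      ∀ φ : Fin (Fintype.card (V × X)) → W,
      (∀ i j, D.Adj (e i).1 (e j).1 ∧ R (e i).2 (e j).2 → C.Adj (φ i) (φ j)) →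
      ∃ f : V → W, IsHom D C f ∧ (IsPointedOf C D → ∀ i, φ i = f (e i).1) := by
    intro W _ C hW φ hφ
    obtain ⟨f, hf, hf'⟩ := colouring_factor D k hk X R δ hδ h2 h3 W C hW (fun q => φ (e.symm q))
      (fun u v x y huv hxy => hφ _ _ (by simpa using ⟨huv, hxy⟩))
    refine ⟨f, hf, fun hpt i => ?_⟩
    have := hf' hpt (e i).1 (e i).2
    simpa using this
  refine ⟨Fintype.card (V × X),
    { Adj := fun i j => D.Adj (e i).1 (e j).1 ∧ R (e i).2 (e j).2
      irrefl := fun i h => D.irrefl _ h.1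
      asymm := fun i j h h' => D.asymm _ _ h.1 h'.1 },
    fun i => (e i).1, hsurj, fun i j h => h.1, ?_, ?_, ?_⟩
  · rintro m hm hml ⟨c, -, hc⟩
    exact h1 m hm hml ⟨fun i => (e (c i)).2, fun i => (hc i).2⟩
  · intro W _ C hW
    constructor
    · rintro ⟨φ, hφ⟩
      obtain ⟨f, hf, -⟩ := key W _ C hW φ (fun i j h => hφ h)
      exact ⟨f, hf⟩
    · rintro ⟨f, hf⟩
      exact ⟨fun i => f (e i).1, fun i j h => hf h.1⟩
  · intro W _ C hW hpt φ hφ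
    obtain ⟨f, hf, hf'⟩ := key W _ C hW φ (fun i j h => hφ h)
    refine ⟨f, ⟨hf, funext fun i => hf' hpt i⟩, ?_⟩
    rintro g ⟨-, hg⟩
    funext v
    obtain ⟨i, hi⟩ := hsurj v
    have a1 := hf' hpt i
    have a2 := congrFun hg i
    simp only [Function.comp] at a2
    simp only at hi
    rw [hi] at a1 a2
    rw [← a1, a2]
end

section
/- If D and C are finite oriented graphs such that D is not C-colourable, then for every positive integer ℓ there exists a finite oriented graph D* of girth at least ℓ that is D-colourable but not C-colourable. -/
/-- **Corollary 2.** If `D` and `C` are finite oriented graphs such that `D` is not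
`C`-colourable, then for every positive integer `ℓ` there is a finite oriented graph `D*`
of girth at least `ℓ` that is `D`-colourable but not `C`-colourable. -/
theorem erdos_type_corollary {V W : Type} [Fintype V] [Fintype W]
    (D : OrientedGraph V) (C : OrientedGraph W)
    (hDC : ¬ ∃ f : V → W, IsHom D C f) (ℓ : ℕ) (hℓ : 0 < ℓ) :
    ∃ (m : ℕ) (Dstar : OrientedGraph (Fin m)),
      GirthAtLeast Dstar ℓ ∧
      (∃ ψ : Fin m → V, IsHom Dstar D ψ) ∧
      ¬ ∃ φ : Fin m → W, IsHom Dstar C φ := by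
  classical
  let N := Fintype.card (V → W) + 1
  let e : (V × Fin N) ≃ Fin (Fintype.card (V × Fin N)) := Fintype.equivFin _
  refine ⟨Fintype.card (V × Fin N),
    { Adj := fun a b => D.Adj (e.symm a).1 (e.symm b).1 ∧ (e.symm a).2 < (e.symm b).2
      irrefl := fun v h => lt_irrefl _ h.2
      asymm := fun u v h h' => lt_asymm h.2 h'.2 }, ?_, ?_, ?_⟩
  · rintro m hm - ⟨c, -, hc⟩
    haveI : NeZero m := ⟨hm.ne'⟩
    obtain ⟨i, hi⟩ := Finite.exists_max (fun i : ZMod m => (e.symm (c i)).2)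
    exact absurd (hc i).2 (not_lt.mpr (hi (i + 1)))
  · exact ⟨fun a => (e.symm a).1, fun x y h => h.1⟩
  · rintro ⟨φ, hφ⟩
    have key : ∀ i j : Fin N, i < j →
        (fun v => φ (e (v, i))) ≠ (fun v => φ (e (v, j))) := by
      intro i j hij heq
      refine hDC ⟨fun v => φ (e (v, i)), fun x y hxy => ?_⟩
      have h := @hφ (e (x, i)) (e (y, j)) (by simpa using ⟨hxy, hij⟩)
      have h2 := congrFun heq y
      simp only at h2 ⊢
      rw [h2]
      exact h
    obtain ⟨i, j, hne, heq⟩ := Fintype.exists_ne_map_eq_of_card_lt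
      (fun (i : Fin N) (v : V) => φ (e (v, i))) (by simp [N])
    rcases lt_or_gt_of_ne hne with h | h
    · exact key i j h heq
    · exact key j i h heq.symm
end

section
/- For every finite oriented core D and every positive integer ℓ, there exists a finite oriented graph D* of girth at least ℓ that is uniquely D-colourable. -/
/-- `Arrow D g h`: there is an arc from `g` to `h` in the exponential digraph of `D`. -/
def Arrow {V : Type} (D : OrientedGraph V) (g h : V → V) : Prop :=
  ∀ ⦃x y⦄, D.Adj x y → D.Adj (g x) (h y)

lemma update_eq_of_core {V : Type} [DecidableEq V] {D : OrientedGraph V} (hD : IsCore D)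
    {g : V → V} (hg : IsAuto D g) (v w : V)
    (hin : ∀ x, D.Adj x v → D.Adj (g x) w) (hout : ∀ y, D.Adj v y → D.Adj w (g y)) :
    w = g v := by
  have hom : IsHom D D (Function.update g v w) := by
    intro x y hxy
    by_cases hx : x = v
    · subst hx
      have hy : y ≠ x := by
        rintro rfl
        exact D.irrefl _ hxy
      simpa [hy] using hout y hxy
    · by_cases hy : y = v
      · subst hy
        simpa [hx] using hin x hxy
      · simpa [hx, hy] using (hg.2 x y).1 hxy
  have hinj := (hD _ hom).1.1
  obtain ⟨t, ht⟩ := hg.1.2 w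
  by_cases htv : t = v
  · rw [← ht, htv]
  · exact absurd (hinj (a₁ := t) (a₂ := v) (by simp [htv, ht])) htv

lemma arrow_auto_eq {V : Type} [Finite V] {D : OrientedGraph V} (hD : IsCore D)
    {g g' : V → V} (hg : IsAuto D g) (hg' : IsAuto D g') (h : Arrow D g g') : g = g' := by
  classical
  funext v
  refine (update_eq_of_core hD hg v (g' v) (fun x hx => h hx) ?_).symm
  intro y hvy
  let e := Equiv.ofBijective g hg.1
  have he : ∀ z, e z = g z := fun z => rfl
  let σ : V → V := fun w => g' (e.symm w)
  have hσ : Function.Injective σ := hg'.1.1.comp e.symm.injective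
  let S : Set V := {w | D.Adj (g' v) w}
  have hmaps : Set.MapsTo σ S S := by
    intro w hw
    obtain ⟨z, rfl⟩ := hg.1.2 w
    obtain ⟨t, ht⟩ := hg.1.2 (g' v)
    have hw' : D.Adj (g' v) (g z) := hw
    rw [← ht] at hw'
    have := h ((hg.2 t z).2 hw')
    change D.Adj (g' v) (g' (e.symm (e z)))
    rw [e.symm_apply_apply, ← ht]
    exact this
  have hsurj : Set.SurjOn σ S S :=
    ((Set.toFinite S).injOn_iff_bijOn_of_mapsTo hmaps |>.1 hσ.injOn).surjOn
  obtain ⟨w, hw, hwy⟩ := hsurj (show g' y ∈ S from (hg'.2 v y).1 hvy)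
  have h1 : e.symm w = y := hg'.1.1 hwy
  have h2 : w = g y := by rw [← h1, ← he, e.apply_symm_apply]
  rw [← h2]
  exact hw

lemma arrow_between_eq {V : Type} {D : OrientedGraph V} (hD : IsCore D)
    {g h : V → V} (hg : IsAuto D g) (h1 : Arrow D g h) (h2 : Arrow D h g) : h = g := by
  classical
  funext v
  exact update_eq_of_core hD hg v (h v) (fun x hx => h1 hx) (fun y hy => h2 hy)

lemma sequence_const {V : Type} [Finite V] {D : OrientedGraph V} (hD : IsCore D)
    (M : ℕ) (hM : M = Nat.card (V → V)) (F : ℤ → V → V)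
    (hF : ∀ (x : ℤ) (k : ℕ), 1 ≤ k → k ≤ 2 * M + 2 → Arrow D (F x) (F (x + k))) :
    (∀ x, IsAuto D (F x)) ∧ ∀ x, F x = F 0 := by
  have window : ∀ x : ℤ, ∃ k : ℕ, k ≤ M ∧ IsAuto D (F (x + k)) := by
    intro x
    have hni : ¬ Function.Injective (fun i : Fin (M + 1) => F (x + (i : ℕ))) := by
      intro hi
      have := Nat.card_le_card_of_injective _ hi
      rw [Nat.card_fin] at this
      omega
    have key : ∀ i j : Fin (M + 1), i < j → F (x + (i : ℕ)) = F (x + (j : ℕ)) →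
        IsAuto D (F (x + (i : ℕ))) := by
      intro i j hij he
      apply hD
      have h3 := hF (x + (i : ℕ)) ((j : ℕ) - (i : ℕ)) (by omega) (by omega)
      have h4 : x + ((i : ℕ) : ℤ) + (((j : ℕ) - (i : ℕ) : ℕ) : ℤ) = x + (j : ℕ) := by omega
      rw [h4, ← he] at h3
      exact h3
    simp only [Function.Injective, not_forall] at hni
    obtain ⟨i, j, he, hne⟩ := hni
    rcases lt_or_gt_of_ne hne with hlt | hlt
    · exact ⟨i, by omega, key i j hlt he⟩
    · exact ⟨j, by omega, key j i hlt he.symm⟩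
  have arr : ∀ a b : ℤ, a < b → b ≤ a + (2 * M + 2) → Arrow D (F a) (F b) := by
    intro a b h1 h2
    have h3 := hF a (b - a).toNat (by omega) (by omega)
    have h4 : a + ((b - a).toNat : ℤ) = b := by omega
    rwa [h4] at h3
  have auto : ∀ x, IsAuto D (F x) := by
    intro y
    obtain ⟨k, hk, hka⟩ := window (y - M - 1)
    obtain ⟨l, hl, hla⟩ := window (y + 1)
    have e1 := arrow_auto_eq hD hka hla (arr _ _ (by omega) (by omega))
    have a1 := arr (y - M - 1 + k) y (by omega) (by omega)
    have a2 := arr y (y + 1 + l) (by omega) (by omega)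
    rw [← e1] at a2
    rw [arrow_between_eq hD hka a1 a2]
    exact hka
  have step : ∀ x, F x = F (x + 1) := fun x =>
    arrow_auto_eq hD (auto x) (auto _) (arr _ _ (by omega) (by omega))
  refine ⟨auto, fun x => ?_⟩
  induction x using Int.induction_on with
  | zero => rfl
  | succ i ih => rw [← step, ih]
  | pred i ih =>
    rw [step, ← ih]
    congr 1
    omega

/-- The circular blow-up of `D`. -/
def circ {V : Type} (D : OrientedGraph V) (N K : ℕ) : OrientedGraph (V × ZMod N) where
  Adj p q := D.Adj p.1 q.1 ∧ ∃ k : ℕ, 1 ≤ k ∧ k ≤ K ∧ q.2 = p.2 + k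
  irrefl v h := D.irrefl _ h.1
  asymm u v h h' := D.asymm _ _ h.1 h'.1

lemma circ_girth {V : Type} (D : OrientedGraph V) (ℓ K : ℕ) (hK : 0 < K) :
    GirthAtLeast (circ D (K * ℓ) K) ℓ := by
  rintro m hm hml ⟨c, -, hc⟩
  haveI : NeZero m := ⟨hm.ne'⟩
  choose k hk1 hk2 hk3 using fun i => (hc i).2
  have h1 : ∑ i, (c (i + 1)).2 = ∑ i, (c i).2 :=
    Equiv.sum_comp (Equiv.addRight (1 : ZMod m)) (fun i => (c i).2)
  have h2 : ((∑ i, k i : ℕ) : ZMod (K * ℓ)) = 0 := by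
    simp only [hk3, Finset.sum_add_distrib] at h1
    push_cast
    simpa using h1
  rw [ZMod.natCast_eq_zero_iff] at h2
  have h3 : ∑ i, k i ≤ m * K := by
    have := Finset.sum_le_card_nsmul (Finset.univ : Finset (ZMod m)) k K (fun i _ => hk2 i)
    simpa [ZMod.card] using this
  have h4 : 0 < ∑ i, k i := Finset.sum_pos (fun i _ => hk1 i) Finset.univ_nonempty
  have h5 := Nat.le_of_dvd h4 h2
  have h6 : m * K < ℓ * K := Nat.mul_lt_mul_of_pos_right hml hK
  rw [mul_comm K ℓ] at h5
  omega

lemma circ_colouring {V : Type} [Finite V] {D : OrientedGraph V} (hD : IsCore D)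
    (N M : ℕ) (hM : M = Nat.card (V → V)) (φ : V × ZMod N → V)
    (hφ : IsHom (circ D N (2 * M + 2)) D φ) :
    ∃ g, IsAuto D g ∧ ∀ p, φ p = g p.1 := by
  obtain ⟨h1, h2⟩ := sequence_const hD M hM (fun x v => φ (v, (x : ZMod N))) (by
    intro x k hk hk' u v huv
    exact hφ ⟨huv, k, hk, hk', by push_cast; rfl⟩)
  refine ⟨_, h1 0, ?_⟩
  rintro ⟨v, a⟩
  obtain ⟨x, rfl⟩ := ZMod.intCast_surjective a
  exact congrFun (h2 x) v

/-- **Corollary 3.** For every finite oriented core `D` and every positive integer `ℓ`,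
there is a finite oriented graph `D*` of girth at least `ℓ` that is uniquely
`D`-colourable: there is a homomorphism of `D*` onto `D`, and any two `D`-colourings of
`D*` differ by an automorphism of `D`. -/
theorem zhu_type_corollary {V : Type} [Fintype V] (D : OrientedGraph V)
    (hD : IsCore D) (ℓ : ℕ) (hℓ : 0 < ℓ) :
    ∃ (m : ℕ) (Dstar : OrientedGraph (Fin m)),
      GirthAtLeast Dstar ℓ ∧
      (∃ ψ : Fin m → V, IsHom Dstar D ψ ∧ Function.Surjective ψ) ∧
      (∀ ψ φ : Fin m → V, IsHom Dstar D ψ → IsHom Dstar D φ →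
        ∃ f : V → V, IsAuto D f ∧ ψ = f ∘ φ) := by
  classical
  set M := Nat.card (V → V) with hM
  set K := 2 * M + 2 with hK
  have hK0 : 0 < K := by omega
  haveI : NeZero (K * ℓ) := ⟨(Nat.mul_pos hK0 hℓ).ne'⟩
  let e := Fintype.equivFin (V × ZMod (K * ℓ))
  let G := circ D (K * ℓ) K
  refine ⟨_, ⟨fun a b => G.Adj (e.symm a) (e.symm b), fun _ => G.irrefl _,
    fun _ _ => G.asymm _ _⟩, ?_, ⟨fun a => (e.symm a).1, ?_, ?_⟩, ?_⟩
  · rintro m hm hml ⟨c, hc, hc'⟩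
    exact circ_girth D ℓ K hK0 m hm hml
      ⟨fun i => e.symm (c i), e.symm.injective.comp hc, hc'⟩
  · intro a b hab
    exact hab.1
  · intro v
    exact ⟨e (v, 0), by simp⟩
  · intro ψ φ hψ hφ
    have lift : ∀ χ : Fin _ → V, IsHom (V := Fin _) ⟨fun a b => G.Adj (e.symm a) (e.symm b),
        fun _ => G.irrefl _, fun _ _ => G.asymm _ _⟩ D χ →
        ∃ g, IsAuto D g ∧ ∀ p, χ (e p) = g p.1 := by
      intro χ hχ
      refine circ_colouring hD (K * ℓ) M hM (fun p => χ (e p)) ?_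
      intro p q hpq
      apply hχ
      change G.Adj (e.symm (e p)) (e.symm (e q))
      rw [e.symm_apply_apply, e.symm_apply_apply]
      exact hpq
    obtain ⟨g, hg, hg'⟩ := lift ψ hψ
    obtain ⟨h, hh, hh'⟩ := lift φ hφ
    let t := Equiv.ofBijective h hh.1
    have ht : ∀ x, h (t.symm x) = x := fun x => t.apply_symm_apply x
    have ht' : ∀ x, t.symm (h x) = x := fun x => t.symm_apply_apply x
    refine ⟨fun x => g (t.symm x), ⟨hg.1.comp t.symm.bijective, ?_⟩, ?_⟩
    · intro x y
      rw [← hg.2, hh.2 (t.symm x), ht, ht]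
    · funext a
      obtain ⟨p, rfl⟩ := e.surjective a
      simp only [Function.comp]
      rw [hg', hh', ht']
end

section
/- Every finite oriented graph D that is a core is D-pointed; that is, there do not exist two distinct homomorphisms from D to D that agree on all but one vertex of D. -/
/-- Every finite oriented graph `D` that is a core is `D`-pointed: there do not exist two
distinct homomorphisms from `D` to `D` that agree on all but one vertex of `D`. -/
theorem core_is_self_pointed {V : Type} [Fintype V] (D : OrientedGraph V)
    (h : IsCore D) : IsPointedOf D D := by
  rintro ⟨f, g, hf, hg, hne, v, hv⟩
  apply hne
  obtain ⟨u, hu⟩ := (h f hf).1.2 (g v)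
  have huv : u = v := by
    by_contra hc
    exact hc ((h g hg).1.1 ((hv u hc).symm.trans hu))
  funext w
  by_cases hw : w = v
  · rw [hw, ← hu, huv]
  · exact hv w hw
end

section
/- For all integers k ≥ 5 and ℓ ≥ 3, there exists a finite oriented graph D with oriented chromatic number exactly k and girth exactly ℓ. -/
/-- A transitive tournament on `0..k-1` without the arc `0 → k-1`, plus a disjoint directed
cycle of length `ℓ`. -/
def bigGraph (k ℓ : ℕ) (hℓ : 3 ≤ ℓ) : OrientedGraph (Fin (k + ℓ)) where
  Adj i j := (i.val < j.val ∧ j.val < k ∧ ¬ (i.val = 0 ∧ j.val = k - 1)) ∨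
    (k ≤ i.val ∧ j.val = i.val + 1) ∨ (i.val = k + ℓ - 1 ∧ j.val = k)
  irrefl v := by omega
  asymm u v := by omega

/-- The transitive tournament on `0..k-1` with the arc between `0` and `k-1` reversed. -/
def target (k : ℕ) (hk : 5 ≤ k) : OrientedGraph (Fin k) where
  Adj i j := (i.val < j.val ∧ ¬ (i.val = 0 ∧ j.val = k - 1)) ∨ (i.val = k - 1 ∧ j.val = 0)
  irrefl v := by omega
  asymm u v := by omega

/-- The colouring: identity on the tournament part, a closed walk on the cycle. -/
def colour (k ℓ n : ℕ) : ℕ :=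
  if n < k then n
  else if n - k < 3 * (ℓ / 3 - 1) then (if (n - k) % 3 = 2 then k - 1 else (n - k) % 3)
  else if n - k = ℓ - 1 then k - 1 else (n - k) - 3 * (ℓ / 3 - 1)

lemma colour_lt (k ℓ n : ℕ) (hk : 5 ≤ k) (hℓ : 3 ≤ ℓ) (hn : n < k + ℓ) : colour k ℓ n < k := by
  unfold colour
  split_ifs <;> omega

lemma upper (k ℓ : ℕ) (hk : 5 ≤ k) (hℓ : 3 ≤ ℓ) :
    IsHom (bigGraph k ℓ hℓ) (target k hk)
      (fun n => ⟨colour k ℓ n.val, colour_lt k ℓ n.val hk hℓ n.isLt⟩) := by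
  rintro ⟨x, hx⟩ ⟨y, hy⟩ h
  simp only [bigGraph, target] at h ⊢
  rcases h with h | h | h
  · unfold colour
    split_ifs <;> omega
  · obtain ⟨h1, rfl⟩ := h
    unfold colour
    split_ifs <;> omega
  · obtain ⟨rfl, rfl⟩ := h
    unfold colour
    split_ifs <;> omega

lemma lower (k ℓ : ℕ) (hk : 5 ≤ k) (hℓ : 3 ≤ ℓ) (n : ℕ) (C : OrientedGraph (Fin n))
    (f : Fin (k + ℓ) → Fin n) (hf : IsHom (bigGraph k ℓ hℓ) C f) : k ≤ n := by
  have key : ∀ i j : Fin k, i.val < j.val → f (Fin.castAdd ℓ i) ≠ f (Fin.castAdd ℓ j) := by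
    intro i j hij he
    by_cases h : i.val = 0 ∧ j.val = k - 1
    · have h1 : (bigGraph k ℓ hℓ).Adj (Fin.castAdd ℓ i) ⟨1, by omega⟩ := by
        simp only [bigGraph, Fin.val_castAdd]; omega
      have h2 : (bigGraph k ℓ hℓ).Adj ⟨1, by omega⟩ (Fin.castAdd ℓ j) := by
        simp only [bigGraph, Fin.val_castAdd]; omega
      have h3 := hf h1
      rw [he] at h3
      exact C.asymm _ _ h3 (hf h2)
    · have h1 : (bigGraph k ℓ hℓ).Adj (Fin.castAdd ℓ i) (Fin.castAdd ℓ j) := by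
        simp only [bigGraph, Fin.val_castAdd]; omega
      have h3 := hf h1
      rw [he] at h3
      exact C.irrefl _ h3
  have inj : Function.Injective (fun i : Fin k => f (Fin.castAdd ℓ i)) := by
    intro i j he
    rcases lt_trichotomy i.val j.val with h | h | h
    · exact absurd he (key i j h)
    · exact Fin.ext h
    · exact absurd he.symm (key j i h)
  simpa using Fintype.card_le_of_injective _ inj

lemma girth (k ℓ : ℕ) (hℓ : 3 ≤ ℓ) : GirthEq (bigGraph k ℓ hℓ) ℓ := by
  constructor
  · have : NeZero ℓ := ⟨by omega⟩
    have : Fact (1 < ℓ) := ⟨by omega⟩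
    refine ⟨fun i => ⟨k + i.val, by have := ZMod.val_lt i; omega⟩, ?_, ?_⟩
    · intro i j h
      simp only [Fin.mk.injEq] at h
      exact ZMod.val_injective ℓ (by omega)
    · intro i
      have h1 := ZMod.val_lt i
      have h2 : (i + 1).val = (i.val + 1) % ℓ := by rw [ZMod.val_add, ZMod.val_one]
      simp only [bigGraph]
      rcases Nat.lt_or_ge (i.val + 1) ℓ with h | h
      · rw [Nat.mod_eq_of_lt h] at h2; omega
      · have h3 : i.val + 1 = ℓ := by omega
        rw [h3, Nat.mod_self] at h2; omega
  · rintro m hm hml ⟨c, -, hc⟩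
    have step : ∀ n : ℕ, (bigGraph k ℓ hℓ).Adj (c (n : ZMod m)) (c ((n + 1 : ℕ) : ZMod m)) := by
      intro n
      have := hc (n : ZMod m)
      push_cast
      exact this
    have hend : (c ((m : ℕ) : ZMod m)).val = (c ((0 : ℕ) : ZMod m)).val := by simp
    generalize ha : (fun n : ℕ => (c (n : ZMod m)).val) = a
    have ha' : ∀ n : ℕ, (c (n : ZMod m)).val = a n := fun n => by rw [← ha]
    simp only [bigGraph, ha'] at step hend
    rcases Nat.lt_or_ge (a 0) k with h0 | h0
    · have : ∀ n, a n < k ∧ a 0 + n ≤ a n := by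
        intro n
        induction n with
        | zero => omega
        | succ n ih => have := step n; omega
      have := this m
      omega
    · have : ∀ n, k ≤ a n ∧ ∃ t, a n + ℓ * t = a 0 + n := by
        intro n
        induction n with
        | zero => exact ⟨h0, 0, by simp⟩
        | succ n ih =>
          obtain ⟨h1, t, ht⟩ := ih
          rcases step n with h | h | h
          · omega
          · exact ⟨by omega, t, by omega⟩
          · exact ⟨by omega, t + 1, by rw [mul_add]; omega⟩
      obtain ⟨-, t, ht⟩ := this m
      have h2 : ℓ * t = m := by omega
      have : ℓ ∣ m := ⟨t, h2.symm⟩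
      have := Nat.le_of_dvd hm this
      omega

/-- **Theorem 4 (construction).** For all integers `k ≥ 5` and `ℓ ≥ 3`, there exists a
finite oriented graph `D` with oriented chromatic number exactly `k` and girth exactly
`ℓ`. -/
theorem exists_orientedGraph_chromatic_girth (k ℓ : ℕ) (hk : 5 ≤ k) (hℓ : 3 ≤ ℓ) :
    ∃ (m : ℕ) (D : OrientedGraph (Fin m)),
      orientedChromaticNumber D = k ∧ GirthEq D ℓ := by
  refine ⟨k + ℓ, bigGraph k ℓ hℓ, ?_, girth k ℓ hℓ⟩
  apply le_antisymm
  · exact Nat.sInf_le ⟨target k hk, _, upper k ℓ hk hℓ⟩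
  · refine le_csInf ⟨k, target k hk, _, upper k ℓ hk hℓ⟩ ?_
    rintro n ⟨C, f, hf⟩
    exact lower k ℓ hk hℓ n C f hf
end

section
/- For every integer ℓ ≥ 3 with ℓ ≠ 5, the directed cycle on ℓ vertices admits a homomorphism to some tournament on 4 vertices. -/
/-- The directed cycle on `ℓ` vertices (`ℓ ≥ 3`): vertices `ZMod ℓ`, arcs `i → i + 1`. -/
def dirCycle (ℓ : ℕ) (hℓ : 3 ≤ ℓ) : OrientedGraph (ZMod ℓ) where
  Adj i j := j = i + 1
  irrefl v h := by
    haveI : NeZero ℓ := ⟨by omega⟩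
    have h1 : ((1 : ℕ) : ZMod ℓ) = 0 := by
      have : v + 1 = v + 0 := by simpa using h.symm
      simpa using add_left_cancel this
    have : ℓ ∣ 1 := (CharP.cast_eq_zero_iff (ZMod ℓ) ℓ 1).mp h1
    have := Nat.le_of_dvd one_pos this
    omega
  asymm u v h h' := by
    haveI : NeZero ℓ := ⟨by omega⟩
    have hu : u = u + 2 := by
      calc u = v + 1 := h'
        _ = (u + 1) + 1 := by rw [h]
        _ = u + 2 := by ring
    have h2 : ((2 : ℕ) : ZMod ℓ) = 0 := by
      have : u + 2 = u + 0 := by simpa using hu.symm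
      simpa using add_left_cancel this
    have : ℓ ∣ 2 := (CharP.cast_eq_zero_iff (ZMod ℓ) ℓ 2).mp h2
    have := Nat.le_of_dvd two_pos this
    omega

/-- The tournament `0→1→2→3→0`, `0→2`, `1→3`. -/
def tour4 : OrientedGraph (Fin 4) where
  Adj u v := (u < v ∧ ¬ (u = 0 ∧ v = 3)) ∨ (u = 3 ∧ v = 0)
  irrefl := by decide
  asymm := by decide

/-- Colour of the `n`-th vertex: `b` blocks `0123`, followed by blocks `023`. -/
def col4 (b n : ℕ) : Fin 4 :=
  if n < 4 * b then
    (if n % 4 = 0 then 0 else if n % 4 = 1 then 1 else if n % 4 = 2 then 2 else 3)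
  else
    (if (n - 4 * b) % 3 = 0 then 0 else if (n - 4 * b) % 3 = 1 then 2 else 3)

lemma col4_step (b n : ℕ) : tour4.Adj (col4 b n) (col4 b (n + 1)) := by
  unfold col4
  split_ifs <;> first | omega | simp [tour4]

lemma col4_end (b n : ℕ) (h : 4 * b ≤ n) (h3 : (n - 4 * b) % 3 = 0) : col4 b n = col4 b 0 := by
  unfold col4
  split_ifs <;> first | rfl | omega

/-- For every integer `ℓ ≥ 3` with `ℓ ≠ 5`, the directed cycle on `ℓ` vertices admits a
homomorphism to some tournament on 4 vertices. -/
theorem hom_cycle_to_tournament4 (ℓ : ℕ) (hℓ : 3 ≤ ℓ) (hne : ℓ ≠ 5) :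
    ∃ T : OrientedGraph (Fin 4), IsTournament T ∧
      ∃ f : ZMod ℓ → Fin 4, IsHom (dirCycle ℓ hℓ) T f := by
  haveI : NeZero ℓ := ⟨by omega⟩
  refine ⟨tour4, by unfold IsTournament tour4; decide, fun x => col4 (ℓ % 3) x.val, ?_⟩
  intro x y hxy
  have hy : y = x + 1 := hxy
  subst hy
  have hs := col4_step (ℓ % 3) x.val
  have hv : (x + 1).val = (x.val + 1) % ℓ := by
    rw [ZMod.val_add, ZMod.val_one'' (by omega)]
  have hlt := ZMod.val_lt x
  show tour4.Adj (col4 (ℓ % 3) x.val) (col4 (ℓ % 3) (x + 1).val)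
  rw [hv]
  by_cases h : x.val + 1 = ℓ
  · have he := col4_end (ℓ % 3) ℓ (by omega) (by omega)
    rw [h] at hs ⊢
    rw [Nat.mod_self, ← he]
    exact hs
  · rw [Nat.mod_eq_of_lt (show x.val + 1 < ℓ by omega)]
    exact hs
end

section
/- Let D be a finite oriented graph with vertex set {1, …, a}, let k and ℓ be positive integers, fix ε with 0 < ε < 1/(4ℓ), and set p = n^{ε−1}. For all sufficiently large n, the expected number of pairs of directed cycles of length less than ℓ in a random oriented graph D̂ drawn from 𝒟(n, p) which intersect in at least one vertex is at most n^{−1/2}. -/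
open MeasureTheory

/-- The vertex set `V₁ ∪ ⋯ ∪ V_a` of the blown-up graph `D₀`, where
`V_i = {i} × Fin n` has size `n`. -/
abbrev Vtx (a n : ℕ) : Type := Fin a × Fin n

/-- The part `V_i` of the vertex set of `D₀`. -/
def cellV (a n : ℕ) (i : Fin a) : Set (Vtx a n) := {x | x.1 = i}

/-- A sample point: for each potential arc of `D₀`, whether it is included. -/
abbrev Omega (a n : ℕ) : Type := Vtx a n × Vtx a n → Bool

/-- The Bernoulli measure on `Bool` with success probability `p`. -/
noncomputable def bernoulliBool (p : ℝ) : Measure Bool :=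
  ENNReal.ofReal p • Measure.dirac true + ENNReal.ofReal (1 - p) • Measure.dirac false

/-- The random oriented graph model `𝒟(n, p)`: each potential arc of `D₀` is included
independently with probability `p` (product of Bernoulli measures). -/
noncomputable def model (a n : ℕ) (p : ℝ) : Measure (Omega a n) :=
  Measure.pi fun _ : Vtx a n × Vtx a n => bernoulliBool p

/-- The random spanning subgraph `D̂` of `D₀` determined by the sample point `ω`: the arc
`x → y` is present iff `x ∈ V_i`, `y ∈ V_j` for an arc `i → j` of `D` and `ω` selects the
pair `(x, y)`. -/
def Dhat {a : ℕ} (D : OrientedGraph (Fin a)) (n : ℕ) (ω : Omega a n) :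
    OrientedGraph (Vtx a n) where
  Adj x y := D.Adj x.1 y.1 ∧ ω (x, y) = true
  irrefl x h := D.irrefl x.1 h.1
  asymm x y h h' := D.asymm x.1 y.1 h.1 h'.1

/-- `S` is the arc set of a directed cycle of length `m` in `G`; directed cycles are
counted up to cyclic rotation, and a directed cycle is uniquely determined (up to
rotation) by its arc set. -/
def IsCycleArcSet {V : Type} (G : OrientedGraph V) (m : ℕ) (S : Set (V × V)) : Prop :=
  ∃ c : ZMod m → V, Function.Injective c ∧ (∀ i, G.Adj (c i) (c (i + 1))) ∧
    S = Set.range fun i => (c i, c (i + 1))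

/-- `S` is the arc set of a directed cycle of length less than `ℓ` in `G`. -/
def IsShortCycleArcSet {V : Type} (G : OrientedGraph V) (ℓ : ℕ) (S : Set (V × V)) : Prop :=
  ∃ m : ℕ, 0 < m ∧ m < ℓ ∧ IsCycleArcSet G m S

/-- The number of directed cycles of length less than `ℓ` in `G`, counted up to cyclic
rotation (i.e. the number of their arc sets). -/
noncomputable def numShortCycles {V : Type} (G : OrientedGraph V) (ℓ : ℕ) : ℕ :=
  Nat.card {S : Set (V × V) // IsShortCycleArcSet G ℓ S}

/-- The vertex `x` lies on the (cycle with) arc set `S`. -/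
def OnArcSet {V : Type} (S : Set (V × V)) (x : V) : Prop :=
  ∃ y, (x, y) ∈ S ∨ (y, x) ∈ S

/-- The number of (unordered) pairs of distinct directed cycles of length less than `ℓ`
in `G` which intersect in at least one vertex, each cycle represented by its arc set. -/
noncomputable def numIntersectingShortCyclePairs {V : Type} (G : OrientedGraph V)
    (ℓ : ℕ) : ℕ :=
  Nat.card {P : Finset (Set (V × V)) // P.card = 2 ∧
    (∀ S ∈ P, IsShortCycleArcSet G ℓ S) ∧ ∃ x : V, ∀ S ∈ P, OnArcSet S x}

open Classical in
/-- Vertices touched by the arc sets in `P`. -/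
noncomputable def wOf {V : Type} [Fintype V] (P : Finset (Set (V × V))) : Finset V :=
  Finset.univ.filter fun x => ∃ S ∈ P, OnArcSet S x

open Classical in
/-- Union of the arc sets in `P`. -/
noncomputable def uOf {V : Type} [Fintype V] (P : Finset (Set (V × V))) : Finset (V × V) :=
  Finset.univ.filter fun e => ∃ S ∈ P, e ∈ S

/-- Arc set having the shape of a short cycle. -/
def Shape {V : Type} (l : ℕ) (S : Set (V × V)) : Prop :=
  ∃ m : ℕ, 0 < m ∧ m < l ∧ ∃ c : ZMod m → V, Function.Injective c ∧
    S = Set.range fun i => (c i, c (i + 1))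

open Classical in
/-- All candidate pairs. -/
noncomputable def qOf (V : Type) [Fintype V] (l : ℕ) : Finset (Finset (Set (V × V))) :=
  Finset.univ.filter fun P => P.card = 2 ∧ (∀ S ∈ P, Shape l S) ∧ ∃ x : V, ∀ S ∈ P, OnArcSet S x

lemma shape_out {V : Type} {l : ℕ} {S : Set (V × V)} (h : Shape l S) {x : V}
    (hx : OnArcSet S x) : ∃ y, (x, y) ∈ S := by
  obtain ⟨m, hm, hl, c, hc, rfl⟩ := h
  obtain ⟨y, ⟨i, hi⟩ | ⟨i, hi⟩⟩ := hx
  · exact ⟨y, i, hi⟩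
  · simp only [Prod.mk.injEq] at hi
    exact ⟨c (i + 1 + 1), i + 1, by simp [hi.2]⟩

lemma shape_subset {V : Type} {l : ℕ} {S T : Set (V × V)} (hS : Shape l S) (hT : Shape l T)
    {x : V} (hxS : OnArcSet S x) (hxT : OnArcSet T x)
    (hinj : Set.InjOn Prod.fst (S ∪ T)) : S ⊆ T := by
  obtain ⟨y, hy⟩ := shape_out hS hxS
  obtain ⟨z, hz⟩ := shape_out hT hxT
  obtain ⟨m, hm, hl, c, hc, rfl⟩ := hS
  obtain ⟨m', hm', hl', d, hd, rfl⟩ := hT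
  obtain ⟨i, hi⟩ := hy
  obtain ⟨j, hj⟩ := hz
  simp only [Prod.mk.injEq] at hi hj
  have key : ∀ k : ℕ, c (i + k) = d (j + k) := by
    intro k
    induction k with
    | zero => simp [hi.1, hj.1]
    | succ k ih =>
      have := hinj (x₁ := (c (i + k), c (i + k + 1))) (x₂ := (d (j + k), d (j + k + 1)))
        (Or.inl ⟨_, rfl⟩) (Or.inr ⟨_, rfl⟩) ih
      simp only [Prod.mk.injEq] at this
      push_cast
      rw [← add_assoc, ← add_assoc]
      exact this.2
  rintro _ ⟨t, rfl⟩
  haveI : NeZero m := ⟨hm.ne'⟩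
  have ht : i + ((t - i).val : ZMod m) = t := by simp
  have h1 := key (t - i).val
  have h2 := key ((t - i).val + 1)
  push_cast at h2
  rw [← add_assoc, ← add_assoc, ht] at h2
  rw [ht] at h1
  exact ⟨j + ((t - i).val : ZMod m'), by simp [h1, h2]⟩

lemma card_w_lt {V : Type} [Fintype V] {l : ℕ} {P : Finset (Set (V × V))} (hP : P ∈ qOf V l) :
    (wOf P).card + 1 ≤ (uOf P).card := by
  classical
  simp only [qOf, Finset.mem_filter, Finset.mem_univ, true_and] at hP
  obtain ⟨h2, hsh, x, hx⟩ := hP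
  have himg : wOf P = (uOf P).image Prod.fst := by
    ext y
    simp only [wOf, uOf, Finset.mem_filter, Finset.mem_univ, true_and, Finset.mem_image]
    constructor
    · rintro ⟨S, hS, hy⟩
      obtain ⟨z, hz⟩ := shape_out (hsh S hS) hy
      exact ⟨(y, z), ⟨S, hS, hz⟩, rfl⟩
    · rintro ⟨⟨y', z⟩, ⟨S, hS, hz⟩, rfl⟩
      exact ⟨S, hS, z, Or.inl hz⟩
  have hle : (wOf P).card ≤ (uOf P).card := himg ▸ Finset.card_image_le
  rcases hle.lt_or_eq with h | h
  · exact h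
  exfalso
  rw [himg] at h
  have hinj := Finset.card_image_iff.1 h
  obtain ⟨S, T, hne, rfl⟩ := Finset.card_eq_two.1 h2
  have hU : ((uOf {S, T} : Finset (V × V)) : Set (V × V)) = S ∪ T := by
    ext e; simp [uOf]
  rw [hU] at hinj
  have a1 := hsh S (by simp)
  have a2 := hsh T (by simp)
  have b1 := hx S (by simp)
  have b2 := hx T (by simp)
  exact hne (Set.Subset.antisymm (shape_subset a1 a2 b1 b2 hinj)
    (shape_subset a2 a1 b2 b1 (by rwa [Set.union_comm])))

lemma shape_card {V : Type} [Fintype V] {l : ℕ} {S : Set (V × V)} (h : Shape l S) :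
    ∃ F : Finset V, F.card < l ∧ ∀ x, OnArcSet S x → x ∈ F := by
  classical
  have h0 := h
  obtain ⟨m, hm, hl, c, hc, hS⟩ := h
  haveI : NeZero m := ⟨hm.ne'⟩
  refine ⟨Finset.univ.image c, ?_, ?_⟩
  · refine lt_of_le_of_lt Finset.card_image_le ?_
    simpa [ZMod.card] using hl
  · intro x hx
    obtain ⟨y, hy⟩ := shape_out h0 hx
    rw [hS] at hy
    obtain ⟨i, hi⟩ := hy
    simp only [Prod.mk.injEq] at hi
    simp only [Finset.mem_image, Finset.mem_univ, true_and]
    exact ⟨i, hi.1⟩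

lemma card_w_le {V : Type} [Fintype V] {l : ℕ} {P : Finset (Set (V × V))} (hP : P ∈ qOf V l) :
    (wOf P).card < 2 * l - 1 := by
  classical
  simp only [qOf, Finset.mem_filter, Finset.mem_univ, true_and] at hP
  obtain ⟨h2, hsh, x, hx⟩ := hP
  obtain ⟨S, T, hne, rfl⟩ := Finset.card_eq_two.1 h2
  obtain ⟨F, hF, hF'⟩ := shape_card (hsh S (by simp))
  obtain ⟨G, hG, hG'⟩ := shape_card (hsh T (by simp))
  have : wOf {S, T} ⊆ F ∪ G := by
    intro y hy
    simp only [wOf, Finset.mem_filter, Finset.mem_univ, true_and] at hy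
    obtain ⟨R, hR, hy⟩ := hy
    simp only [Finset.mem_insert, Finset.mem_singleton] at hR
    rcases hR with rfl | rfl
    · exact Finset.mem_union_left _ (hF' y hy)
    · exact Finset.mem_union_right _ (hG' y hy)
  have h3 := Finset.card_le_card this
  have h4 := Finset.card_union_le F G
  omega

open Classical in
lemma card_q {V : Type} [Fintype V] (l v : ℕ) (hv : v < 2 * l - 1) :
    ((qOf V l).filter fun P => (wOf P).card = v).card ≤
      2 ^ 2 ^ ((2 * l) * (2 * l)) * (Fintype.card V) ^ v := by
  have h := Finset.card_le_mul_card_image_of_maps_to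
    (s := (qOf V l).filter fun P => (wOf P).card = v) (t := Finset.powersetCard v Finset.univ)
    (f := wOf) (by intro P hP; simp at hP ⊢; exact hP.2) (2 ^ 2 ^ ((2 * l) * (2 * l))) ?_
  · refine h.trans (Nat.mul_le_mul_left _ ?_)
    rw [Finset.card_powersetCard, Finset.card_univ]
    exact Nat.choose_le_pow _ _
  · intro W hW
    have hW : W.card = v := by simpa using hW
    have hsub : (((qOf V l).filter fun P => (wOf P).card = v).filter fun P => wOf P = W) ⊆
        (((W ×ˢ W).powerset).image (fun F : Finset (V × V) => (F : Set (V × V)))).powerset := by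
      intro P hP
      simp only [Finset.mem_filter] at hP
      rw [Finset.mem_powerset]
      intro S hS
      rw [Finset.mem_image]
      refine ⟨S.toFinset, ?_, by simp⟩
      rw [Finset.mem_powerset]
      rintro ⟨x, y⟩ he
      have he : (x, y) ∈ S := by simpa using he
      rw [← hP.2]
      simp only [wOf, Finset.mem_product, Finset.mem_filter, Finset.mem_univ, true_and]
      exact ⟨⟨S, hS, y, Or.inl he⟩, ⟨S, hS, x, Or.inr he⟩⟩
    refine (Finset.card_le_card hsub).trans ?_
    rw [Finset.card_powerset]
    refine Nat.pow_le_pow_right (by norm_num) (Finset.card_image_le.trans ?_)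
    rw [Finset.card_powerset, Finset.card_product, hW]
    exact Nat.pow_le_pow_right (by norm_num) (Nat.mul_le_mul (by omega) (by omega))

lemma sum_q {V : Type} [Fintype V] (l : ℕ) (p : ℝ) (hp0 : 0 ≤ p) (hp1 : p ≤ 1) :
    ∑ P ∈ qOf V l, p ^ (uOf P).card ≤
      ∑ v ∈ Finset.range (2 * l - 1),
        (2 ^ 2 ^ ((2 * l) * (2 * l)) * (Fintype.card V : ℝ) ^ v) * p ^ (v + 1) := by
  classical
  rw [← Finset.sum_fiberwise_of_maps_to (s := qOf V l) (t := Finset.range (2 * l - 1))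
    (g := fun P => (wOf P).card) (fun P hP => Finset.mem_range.2 (card_w_le hP))]
  refine Finset.sum_le_sum fun v hv => ?_
  refine (Finset.sum_le_card_nsmul _ _ (p ^ (v + 1)) ?_).trans ?_
  · intro P hP
    rw [Finset.mem_filter] at hP
    exact pow_le_pow_of_le_one hp0 hp1 (hP.2 ▸ card_w_lt hP.1)
  · rw [nsmul_eq_mul]
    refine mul_le_mul_of_nonneg_right ?_ (by positivity)
    exact_mod_cast card_q (V := V) l v (Finset.mem_range.1 hv)

lemma bern_prob (p : ℝ) (hp0 : 0 ≤ p) (hp1 : p ≤ 1) : IsProbabilityMeasure (bernoulliBool p) := by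
  constructor
  simp only [bernoulliBool, Measure.add_apply, Measure.smul_apply, measure_univ, smul_eq_mul,
    mul_one]
  rw [← ENNReal.ofReal_add hp0 (by linarith)]
  simp

lemma model_all (a n : ℕ) (p : ℝ) (hp0 : 0 ≤ p) (hp1 : p ≤ 1)
    (U : Finset (Vtx a n × Vtx a n)) :
    (model a n p).real {ω | ∀ e ∈ U, ω e = true} = p ^ U.card := by
  classical
  haveI := bern_prob p hp0 hp1
  have hset : {ω : Omega a n | ∀ e ∈ U, ω e = true} =
      Set.pi Set.univ (fun e => if e ∈ U then ({true} : Set Bool) else Set.univ) := by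
    ext ω
    simp only [Set.mem_ofPred_eq, Set.mem_pi, Set.mem_univ, true_imp_iff]
    refine forall_congr' fun e => ?_
    by_cases h : e ∈ U <;> simp [h]
  rw [hset, Measure.real, model, Measure.pi_pi]
  have : ∀ e, bernoulliBool p (if e ∈ U then ({true} : Set Bool) else Set.univ) =
      if e ∈ U then ENNReal.ofReal p else 1 := by
    intro e
    by_cases h : e ∈ U
    · simp [h, bernoulliBool]
    · rw [if_neg h, if_neg h, measure_univ]
  simp only [this]
  rw [Finset.prod_ite_mem, Finset.univ_inter, Finset.prod_const, ENNReal.toReal_pow,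
    ENNReal.toReal_ofReal hp0]

open Classical in
lemma num_le {a : ℕ} (D : OrientedGraph (Fin a)) (n l : ℕ) (ω : Omega a n) :
    (numIntersectingShortCyclePairs (Dhat D n ω) l : ℝ) ≤
      ∑ P ∈ qOf (Vtx a n) l,
        Set.indicator {ω : Omega a n | ∀ e ∈ uOf P, ω e = true} (fun _ => (1 : ℝ)) ω := by
  simp only [Set.indicator_apply, Set.mem_ofPred_eq]
  rw [Finset.sum_boole, numIntersectingShortCyclePairs, Nat.card_eq_fintype_card,
    Fintype.card_subtype]
  refine Nat.cast_le.2 (Finset.card_le_card ?_)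
  intro P hP
  simp only [Finset.mem_filter, Finset.mem_univ, true_and, qOf] at hP ⊢
  obtain ⟨h2, hsh, hx⟩ := hP
  refine ⟨⟨h2, ?_, hx⟩, ?_⟩
  · intro S hS
    obtain ⟨m, hm, hl, c, hc, -, hS⟩ := hsh S hS
    exact ⟨m, hm, hl, c, hc, hS⟩
  · intro e he
    simp only [uOf, Finset.mem_filter, Finset.mem_univ, true_and] at he
    obtain ⟨S, hS, he⟩ := he
    obtain ⟨m, hm, hl, c, hc, hadj, rfl⟩ := hsh S hS
    obtain ⟨i, rfl⟩ := he
    exact (hadj i).2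

lemma expect_le {a : ℕ} (D : OrientedGraph (Fin a)) (n l : ℕ) (p : ℝ) (hp0 : 0 ≤ p)
    (hp1 : p ≤ 1) :
    (∫ ω, (numIntersectingShortCyclePairs (Dhat D n ω) l : ℝ) ∂ (model a n p)) ≤
      ∑ P ∈ qOf (Vtx a n) l, p ^ (uOf P).card := by
  haveI := bern_prob p hp0 hp1
  haveI : IsProbabilityMeasure (model a n p) := by unfold model; infer_instance
  refine (integral_mono (Integrable.of_finite) (Integrable.of_finite) (num_le D n l)).trans ?_
  rw [integral_finsetSum _ (fun _ _ => Integrable.of_finite)]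
  refine le_of_eq (Finset.sum_congr rfl fun P _ => ?_)
  rw [integral_indicator (Set.toFinite _).measurableSet]
  rw [← model_all a n p hp0 hp1, setIntegral_const, smul_eq_mul, mul_one]

/-- **Lemma 5(ii).** With `0 < ε < 1/(4ℓ)` and `p = n^(ε−1)`, for all sufficiently large
`n` the expected number of pairs of directed cycles of length less than `ℓ` in a random
oriented graph drawn from `𝒟(n, p)` which intersect in at least one vertex is at most
`n^(−1/2)`. -/
theorem expected_intersecting_short_cycle_pairs (a : ℕ) (D : OrientedGraph (Fin a))
    (k ℓ : ℕ) (hk : 0 < k) (hℓ : 0 < ℓ) (ε : ℝ) (hε0 : 0 < ε) (hε : ε < 1 / (4 * ℓ)) :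
    ∃ N : ℕ, ∀ n : ℕ, N ≤ n →
      (∫ ω, (numIntersectingShortCyclePairs (Dhat D n ω) ℓ : ℝ)
          ∂ (model a n ((n : ℝ) ^ (ε - 1)))) ≤
        (n : ℝ) ^ (-(1 : ℝ) / 2) := by
  obtain ⟨C, hC⟩ : ∃ C : ℝ, C = ∑ v ∈ Finset.range (2 * ℓ - 1),
      (2 ^ 2 ^ ((2 * ℓ) * (2 * ℓ)) : ℝ) * (a : ℝ) ^ v := ⟨_, rfl⟩
  have hℓ' : (1 : ℝ) ≤ ℓ := by exact_mod_cast hℓ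
  have hb : ε * (2 * ℓ - 1) < 1 / 2 := by
    rw [lt_div_iff₀ (by positivity)] at hε
    nlinarith
  set δ : ℝ := 1 / 2 - ε * (2 * ℓ - 1) with hδ
  have hδ0 : 0 < δ := by linarith
  have ht : Filter.Tendsto (fun n : ℕ => C * (n : ℝ) ^ (-δ)) Filter.atTop (nhds 0) := by
    have := ((tendsto_rpow_neg_atTop hδ0).comp tendsto_natCast_atTop_atTop).const_mul C
    simpa using this
  obtain ⟨N, hN⟩ := Filter.eventually_atTop.1 (ht.eventually (ge_mem_nhds one_pos))
  refine ⟨max N 1, fun n hn => ?_⟩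
  have hn1 : (1 : ℝ) ≤ n := by exact_mod_cast (le_max_right N 1).trans hn
  have hn0 : (0 : ℝ) < n := by linarith
  have hNn := hN n ((le_max_left N 1).trans hn)
  have hℓ2 : ε < 1 := by nlinarith
  have hp0 : 0 ≤ (n : ℝ) ^ (ε - 1) := by positivity
  have hp1 : (n : ℝ) ^ (ε - 1) ≤ 1 := Real.rpow_le_one_of_one_le_of_nonpos hn1 (by linarith)
  refine (expect_le D n ℓ _ hp0 hp1).trans ((sum_q ℓ _ hp0 hp1).trans ?_)
  have hterm : ∀ v ∈ Finset.range (2 * ℓ - 1),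
      ((2 ^ 2 ^ ((2 * ℓ) * (2 * ℓ)) : ℝ) * (Fintype.card (Vtx a n) : ℝ) ^ v) *
        ((n : ℝ) ^ (ε - 1)) ^ (v + 1) ≤
      ((2 ^ 2 ^ ((2 * ℓ) * (2 * ℓ)) : ℝ) * (a : ℝ) ^ v) *
        ((n : ℝ) ^ (-δ) * (n : ℝ) ^ (-(1 : ℝ) / 2)) := by
    intro v hv
    have hv' : (v : ℝ) + 1 ≤ 2 * ℓ - 1 := by
      have h1 : v + 2 ≤ 2 * ℓ := by have := Finset.mem_range.1 hv; omega
      have h2 : (v : ℝ) + 2 ≤ 2 * ℓ := by exact_mod_cast h1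
      linarith
    have hcard : (Fintype.card (Vtx a n) : ℝ) = a * n := by simp
    rw [hcard, mul_pow, ← mul_assoc, mul_assoc (_ * _)]
    refine mul_le_mul_of_nonneg_left ?_ (by positivity)
    rw [← Real.rpow_natCast, ← Real.rpow_natCast, ← Real.rpow_mul hn0.le, ← Real.rpow_add hn0,
      ← Real.rpow_add hn0]
    refine Real.rpow_le_rpow_of_exponent_le hn1 ?_
    push_cast
    rw [hδ]
    nlinarith
  refine (Finset.sum_le_sum hterm).trans ?_
  rw [← Finset.sum_mul, ← hC, ← mul_assoc]
  exact mul_le_of_le_one_left (by positivity) hNn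
end

section
/- Let D be a finite oriented graph with vertex set {1, …, a}, let k and ℓ be positive integers, fix ε with 0 < ε < 1/(4ℓ), and set p = n^{ε−1}. Then, as n → ∞, the probability that a random oriented graph D̂ drawn from 𝒟(n, p) has at most n^{εℓ} directed cycles of length less than ℓ and that these short cycles are pairwise vertex-disjoint tends to 1. -/
open MeasureTheory

lemma bernoulliBool_prob (p : ℝ) (h0 : 0 ≤ p) (h1 : p ≤ 1) :
    IsProbabilityMeasure (bernoulliBool p) := by
  constructor
  simp only [bernoulliBool, Measure.add_apply, Measure.smul_apply, smul_eq_mul, measure_univ,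
    mul_one]
  rw [← ENNReal.ofReal_add h0 (by linarith)]
  simp

lemma bernoulliBool_true (p : ℝ) : bernoulliBool p {true} = ENNReal.ofReal p := by
  simp [bernoulliBool]

lemma model_prob (a n : ℕ) (p : ℝ) (h0 : 0 ≤ p) (h1 : p ≤ 1) :
    IsProbabilityMeasure (model a n p) := by
  have := bernoulliBool_prob p h0 h1
  unfold model
  infer_instance

lemma model_present (a n : ℕ) (p : ℝ) (h0 : 0 ≤ p) (h1 : p ≤ 1)
    (W : Finset (Vtx a n × Vtx a n)) :
    model a n p {ω | ∀ e ∈ W, ω e = true} = ENNReal.ofReal p ^ W.card := by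
  have := bernoulliBool_prob p h0 h1
  have hs : {ω : Omega a n | ∀ e ∈ W, ω e = true} =
      Set.pi Set.univ (fun e => if e ∈ W then ({true} : Set Bool) else Set.univ) := by
    ext ω
    simp only [Set.mem_setOf_eq, Set.mem_pi, Set.mem_univ, true_imp_iff]
    refine forall_congr' fun e => ?_
    by_cases h : e ∈ W <;> simp [h]
  rw [hs, model, Measure.pi_pi]
  have : ∀ e : Vtx a n × Vtx a n,
      bernoulliBool p (if e ∈ W then ({true} : Set Bool) else Set.univ) =
      if e ∈ W then ENNReal.ofReal p else 1 := by
    intro e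
    split_ifs
    · exact bernoulliBool_true p
    · exact measure_univ
  simp only [this]
  rw [Finset.prod_ite_mem]
  simp

/-- Two distinct cycles sharing a vertex span more arcs than vertices. -/
lemma dense_of_two_cycles {V : Type} (G : OrientedGraph V) (ℓ : ℕ)
    (S T : Set (V × V)) (hS : IsShortCycleArcSet G ℓ S) (hT : IsShortCycleArcSet G ℓ T)
    (hne : S ≠ T) (x : V) (hxS : OnArcSet S x) (hxT : OnArcSet T x) :
    ∃ v ∈ Finset.range (2 * ℓ - 1), ∃ A : Finset (Fin v × Fin v), ∃ f : Fin v → V,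
      (v + 1 ≤ A.card ∧ Function.Injective f) ∧ ∀ e ∈ A, G.Adj (f e.1) (f e.2) := by
  classical
  obtain ⟨m₁, hm₁, hl₁, c, hc, hcA, rfl⟩ := hS
  obtain ⟨m₂, hm₂, hl₂, d, hd, hdA, rfl⟩ := hT
  haveI : NeZero m₁ := ⟨hm₁.ne'⟩
  haveI : NeZero m₂ := ⟨hm₂.ne'⟩
  obtain ⟨i₀, hi₀⟩ : ∃ i, c i = x := by
    obtain ⟨y, ⟨i, hi⟩ | ⟨i, hi⟩⟩ := hxS
    · exact ⟨i, congrArg Prod.fst hi⟩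
    · exact ⟨i + 1, congrArg Prod.snd hi⟩
  obtain ⟨j₀, hj₀⟩ : ∃ i, d i = x := by
    obtain ⟨y, ⟨i, hi⟩ | ⟨i, hi⟩⟩ := hxT
    · exact ⟨i, congrArg Prod.fst hi⟩
    · exact ⟨i + 1, congrArg Prod.snd hi⟩
  let U : Finset V := Finset.univ.image c ∪ Finset.univ.image d
  let W : Finset (V × V) := Finset.univ.image (fun i => (c i, c (i + 1))) ∪
    Finset.univ.image (fun i => (d i, d (i + 1)))
  have hW : ∀ e, e ∈ W ↔ (∃ i, (c i, c (i + 1)) = e) ∨ ∃ i, (d i, d (i + 1)) = e := by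
    intro e; simp [W]
  have hU : ∀ e, e ∈ U ↔ (∃ i, c i = e) ∨ ∃ i, d i = e := by
    intro e; simp [U]
  have hWU : ∀ e ∈ W, e.1 ∈ U ∧ e.2 ∈ U := by
    intro e he
    rw [hU, hU]
    rcases (hW e).1 he with ⟨i, rfl⟩ | ⟨i, rfl⟩
    · exact ⟨Or.inl ⟨i, rfl⟩, Or.inl ⟨_, rfl⟩⟩
    · exact ⟨Or.inr ⟨i, rfl⟩, Or.inr ⟨_, rfl⟩⟩
  have hWA : ∀ e ∈ W, G.Adj e.1 e.2 := by
    intro e he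
    rcases (hW e).1 he with ⟨i, rfl⟩ | ⟨i, rfl⟩
    · exact hcA i
    · exact hdA i
  have himg : W.image Prod.fst = U := by
    ext y
    simp only [Finset.mem_image]
    constructor
    · rintro ⟨e, he, rfl⟩
      exact (hWU e he).1
    · intro hy
      rcases (hU y).1 hy with ⟨i, rfl⟩ | ⟨i, rfl⟩
      · exact ⟨_, (hW _).2 (Or.inl ⟨i, rfl⟩), rfl⟩
      · exact ⟨_, (hW _).2 (Or.inr ⟨i, rfl⟩), rfl⟩
  have hcard : U.card + 1 ≤ W.card := by
    by_contra hlt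
    have hle : (W.image Prod.fst).card = W.card := by
      apply le_antisymm Finset.card_image_le
      rw [himg]; omega
    have hinj := Finset.card_image_iff.1 hle
    have key : ∀ k : ℕ, c (i₀ + k) = d (j₀ + k) := by
      intro k
      induction k with
      | zero => simp [hi₀, hj₀]
      | succ k ih =>
        have h1 : (c (i₀ + k), c (i₀ + k + 1)) ∈ (W : Set (V × V)) :=
          (hW _).2 (Or.inl ⟨_, rfl⟩)
        have h2 : (d (j₀ + k), d (j₀ + k + 1)) ∈ (W : Set (V × V)) :=
          (hW _).2 (Or.inr ⟨_, rfl⟩)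
        have h3 := hinj h1 h2 ih
        have h4 := congrArg Prod.snd h3
        simpa [add_assoc] using h4
    apply hne
    have key' : ∀ k : ℕ, c (i₀ + k + 1) = d (j₀ + k + 1) := by
      intro k
      have := key (k + 1)
      simpa [add_assoc] using this
    ext e
    constructor
    · rintro ⟨i, rfl⟩
      refine ⟨j₀ + ((i - i₀).val : ℕ), ?_⟩
      have hi : i₀ + (((i - i₀).val : ℕ) : ZMod m₁) = i := by simp
      simp only [← key, ← key', hi]
    · rintro ⟨i, rfl⟩
      refine ⟨i₀ + ((i - j₀).val : ℕ), ?_⟩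
      have hi : j₀ + (((i - j₀).val : ℕ) : ZMod m₂) = i := by simp
      simp only [key, key', hi]
  have hUc : U.card ≤ m₁ + m₂ := by
    refine (Finset.card_union_le _ _).trans (add_le_add ?_ ?_)
    · exact Finset.card_image_le.trans (by simp [ZMod.card])
    · exact Finset.card_image_le.trans (by simp [ZMod.card])
  let f : Fin U.card → V := fun i => (U.equivFin.symm i : V)
  have hf : Function.Injective f :=
    Subtype.val_injective.comp U.equivFin.symm.injective
  refine ⟨U.card, by rw [Finset.mem_range]; omega,
    Finset.univ.filter (fun e => (f e.1, f e.2) ∈ W), f, ⟨?_, hf⟩, ?_⟩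
  · refine hcard.trans ?_
    have : W ⊆ (Finset.univ.filter (fun e : Fin U.card × Fin U.card =>
        (f e.1, f e.2) ∈ W)).image (fun e => (f e.1, f e.2)) := by
      intro e he
      obtain ⟨h1, h2⟩ := hWU e he
      have e1 : f (U.equivFin ⟨e.1, h1⟩) = e.1 := by simp [f]
      have e2 : f (U.equivFin ⟨e.2, h2⟩) = e.2 := by simp [f]
      refine Finset.mem_image.2 ⟨(U.equivFin ⟨e.1, h1⟩, U.equivFin ⟨e.2, h2⟩), ?_, ?_⟩
      · simp only [Finset.mem_filter, Finset.mem_univ, true_and, e1, e2]; exact he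
      · simp only [e1, e2]
    exact (Finset.card_le_card this).trans Finset.card_image_le
  · intro e he
    exact hWA _ (Finset.mem_filter.1 he).2

/-- The first moment bound for dense small configurations. -/
lemma dense_bound (a n : ℕ) (D : OrientedGraph (Fin a)) (ℓ : ℕ) (p : ℝ) (h0 : 0 ≤ p)
    (h1 : p ≤ 1) :
    model a n p {ω | ∃ S T : Set (Vtx a n × Vtx a n),
            IsShortCycleArcSet (Dhat D n ω) ℓ S ∧ IsShortCycleArcSet (Dhat D n ω) ℓ T ∧
            S ≠ T ∧ ∃ x : Vtx a n, OnArcSet S x ∧ OnArcSet T x} ≤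
    ENNReal.ofReal (∑ v ∈ Finset.range (2 * ℓ - 1),
      (2 ^ (v * v) * ((a * n : ℝ) ^ v * p ^ (v + 1)))) := by
  classical
  have := model_prob a n p h0 h1
  have hsub : {ω : Omega a n | ∃ S T : Set (Vtx a n × Vtx a n),
            IsShortCycleArcSet (Dhat D n ω) ℓ S ∧ IsShortCycleArcSet (Dhat D n ω) ℓ T ∧
            S ≠ T ∧ ∃ x : Vtx a n, OnArcSet S x ∧ OnArcSet T x} ⊆
      ⋃ v ∈ Finset.range (2 * ℓ - 1), ⋃ A ∈ (Finset.univ : Finset (Finset (Fin v × Fin v))),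
        ⋃ f ∈ (Finset.univ : Finset (Fin v → Vtx a n)),
        {ω | (v + 1 ≤ A.card ∧ Function.Injective f) ∧ ∀ e ∈ A, ω (f e.1, f e.2) = true} := by
    rintro ω ⟨S, T, hS, hT, hne, x, hxS, hxT⟩
    obtain ⟨v, hv, A, f, h, hA⟩ := dense_of_two_cycles _ ℓ S T hS hT hne x hxS hxT
    simp only [Set.mem_iUnion]
    exact ⟨v, hv, A, Finset.mem_univ _, f, Finset.mem_univ _, h, fun e he => (hA e he).2⟩
  refine (measure_mono hsub).trans ?_
  refine (measure_biUnion_finset_le _ _).trans ?_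
  rw [ENNReal.ofReal_sum_of_nonneg (fun v _ => by positivity)]
  refine Finset.sum_le_sum fun v _ => ?_
  refine (measure_biUnion_finset_le _ _).trans ?_
  have hterm : ∀ (A : Finset (Fin v × Fin v)) (f : Fin v → Vtx a n),
      model a n p {ω | (v + 1 ≤ A.card ∧ Function.Injective f) ∧
        ∀ e ∈ A, ω (f e.1, f e.2) = true} ≤ ENNReal.ofReal (p ^ (v + 1)) := by
    intro A f
    by_cases h : v + 1 ≤ A.card ∧ Function.Injective f
    · have hs : {ω : Omega a n | (v + 1 ≤ A.card ∧ Function.Injective f) ∧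
          ∀ e ∈ A, ω (f e.1, f e.2) = true} =
          {ω | ∀ e ∈ A.image (fun e => (f e.1, f e.2)), ω e = true} := by
        ext ω
        constructor
        · rintro ⟨_, hω⟩ e he
          obtain ⟨q, hq, rfl⟩ := Finset.mem_image.1 he
          exact hω q hq
        · intro hω
          exact ⟨h, fun e he => hω _ (Finset.mem_image_of_mem _ he)⟩
      rw [hs, model_present a n p h0 h1, Finset.card_image_of_injective,
        ← ENNReal.ofReal_pow h0]
      · exact ENNReal.ofReal_le_ofReal (pow_le_pow_of_le_one h0 h1 h.1)
      · rintro ⟨i, j⟩ ⟨i', j'⟩ hh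
        simp only [Prod.mk.injEq] at hh
        rw [h.2 hh.1, h.2 hh.2]
    · have hs : {ω : Omega a n | (v + 1 ≤ A.card ∧ Function.Injective f) ∧
          ∀ e ∈ A, ω (f e.1, f e.2) = true} = ∅ :=
        Set.eq_empty_of_forall_notMem fun ω hω => h hω.1
      rw [hs, measure_empty]
      exact zero_le
  calc _ ≤ ∑ A : Finset (Fin v × Fin v), ∑ f : Fin v → Vtx a n,
          ENNReal.ofReal (p ^ (v + 1)) := by
        refine Finset.sum_le_sum fun A _ => ?_
        refine (measure_biUnion_finset_le _ _).trans ?_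
        exact Finset.sum_le_sum fun f _ => hterm A f
    _ = ENNReal.ofReal (2 ^ (v * v) * ((a * n : ℝ) ^ v * p ^ (v + 1))) := by
        rw [ENNReal.ofReal_mul (by positivity), ENNReal.ofReal_mul (by positivity)]
        have e1 : ENNReal.ofReal (2 ^ (v * v)) = ((2 ^ (v * v) : ℕ) : ENNReal) := by
          rw [← ENNReal.ofReal_natCast]; push_cast; rfl
        have e2 : ENNReal.ofReal ((a * n : ℝ) ^ v) = (((a * n) ^ v : ℕ) : ENNReal) := by
          rw [← ENNReal.ofReal_natCast]; push_cast; rfl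
        rw [e1, e2]
        simp

/-- The expected number of short cycles bound, through Markov. -/
lemma count_bound (a n : ℕ) (D : OrientedGraph (Fin a)) (ℓ : ℕ) (p : ℝ) (h0 : 0 ≤ p)
    (h1 : p ≤ 1) (t : ℝ) (ht : 0 < t) :
    model a n p {ω | t < (numShortCycles (Dhat D n ω) ℓ : ℝ)} ≤
    ENNReal.ofReal ((∑ m ∈ Finset.range (ℓ - 1), ((a * n : ℝ) ^ (m + 1) * p ^ (m + 1))) / t) := by
  classical
  have := model_prob a n p h0 h1
  let E : (q : (m : Fin (ℓ - 1)) × (ZMod (m + 1) → Vtx a n)) → Set (Omega a n) :=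
    fun q => {ω | Function.Injective q.2 ∧ ∀ i, ω (q.2 i, q.2 (i + 1)) = true}
  have hE : ∀ q, model a n p (E q) ≤ ENNReal.ofReal (p ^ ((q.1 : ℕ) + 1)) := by
    rintro ⟨m, c⟩
    by_cases h : Function.Injective c
    · have hs : E ⟨m, c⟩ =
          {ω | ∀ e ∈ Finset.univ.image (fun i => (c i, c (i + 1))), ω e = true} := by
        ext ω
        simp [E, h]
      rw [hs, model_present a n p h0 h1, Finset.card_image_of_injective,
        ← ENNReal.ofReal_pow h0]
      · simp [ZMod.card]
      · intro i j hh
        exact h (congrArg Prod.fst hh)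
    · simp [E, h]
  have hcount : ∀ ω, (numShortCycles (Dhat D n ω) ℓ : ENNReal) ≤
      ∑ q, (E q).indicator (fun _ => (1 : ENNReal)) ω := by
    intro ω
    have h2 : numShortCycles (Dhat D n ω) ℓ ≤ (Finset.univ.filter (fun q => ω ∈ E q)).card := by
      have hch : ∀ S : {S : Set (Vtx a n × Vtx a n) // IsShortCycleArcSet (Dhat D n ω) ℓ S},
          ∃ q : {q // q ∈ Finset.univ.filter (fun q => ω ∈ E q)},
            S.1 = Set.range fun i => (q.1.2 i, q.1.2 (i + 1)) := by
        rintro ⟨S, m, hm, hml, c, hc, hcA, hS⟩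
        obtain ⟨m, rfl⟩ : ∃ k, m = k + 1 := ⟨m - 1, by omega⟩
        refine ⟨⟨⟨⟨m, by omega⟩, c⟩, ?_⟩, hS⟩
        simp only [Finset.mem_filter, Finset.mem_univ, true_and]
        exact ⟨hc, fun i => (hcA i).2⟩
      choose g hg using hch
      have hgi : Function.Injective g := by
        intro S T h
        apply Subtype.ext
        rw [hg S, hg T, h]
      have := Nat.card_le_card_of_injective g hgi
      rw [Nat.card_eq_fintype_card (α := {q // q ∈ Finset.univ.filter (fun q => ω ∈ E q)}),
        Fintype.card_coe] at this
      exact this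
    calc (numShortCycles (Dhat D n ω) ℓ : ENNReal)
        ≤ ((Finset.univ.filter (fun q => ω ∈ E q)).card : ENNReal) := by exact_mod_cast h2
      _ = _ := by 
          simp only [Set.indicator_apply]
          rw [Finset.sum_ite, Finset.sum_const_zero, add_zero, Finset.sum_const,
            nsmul_eq_mul, mul_one]
  have hmeas : ∀ q, MeasurableSet (E q) := fun q => (Set.toFinite _).measurableSet
  have hmk := meas_ge_le_lintegral_div (μ := model a n p)
    (f := fun ω => ∑ q, (E q).indicator (fun _ => (1 : ENNReal)) ω)
    (by
      refine Measurable.aemeasurable ?_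
      exact Finset.measurable_fun_sum _ fun q _ => measurable_const.indicator (hmeas q))
    (ε := ENNReal.ofReal t) (by simpa using ht) ENNReal.ofReal_ne_top
  refine (measure_mono ?_).trans (hmk.trans ?_)
  · intro ω hω
    refine le_trans ?_ (hcount ω)
    rw [← ENNReal.ofReal_natCast]
    exact ENNReal.ofReal_le_ofReal (le_of_lt hω)
  · rw [ENNReal.ofReal_div_of_pos ht]
    refine ENNReal.div_le_div_right ?_ _
    rw [lintegral_finsetSum _ fun q _ => measurable_const.indicator (hmeas q)]
    calc _ ≤ ∑ q : (m : Fin (ℓ - 1)) × (ZMod (m + 1) → Vtx a n),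
          ENNReal.ofReal (p ^ ((q.1 : ℕ) + 1)) := by
          refine Finset.sum_le_sum fun q _ => ?_
          rw [lintegral_indicator_const (hmeas q), one_mul]
          exact hE q
      _ = _ := by
          rw [Fintype.sum_sigma, ENNReal.ofReal_sum_of_nonneg (fun v _ => by positivity),
            Finset.sum_range]
          refine Finset.sum_congr rfl fun m _ => ?_
          rw [ENNReal.ofReal_mul (by positivity)]
          have e2 : ENNReal.ofReal ((a * n : ℝ) ^ ((m : ℕ) + 1)) =
              (((a * n) ^ ((m : ℕ) + 1) : ℕ) : ENNReal) := by
            rw [← ENNReal.ofReal_natCast]; push_cast; rfl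
          rw [e2]
          simp [ZMod.card]

lemma tendsto_count (a ℓ : ℕ) (ε : ℝ) (hε0 : 0 < ε) :
    Filter.Tendsto (fun n : ℕ => (∑ m ∈ Finset.range (ℓ - 1),
      ((a * n : ℝ) ^ (m + 1) * ((n : ℝ) ^ (ε - 1)) ^ (m + 1))) / (n : ℝ) ^ (ε * (ℓ : ℝ)))
      Filter.atTop (nhds 0) := by
  have h : Filter.Tendsto (fun n : ℕ => ∑ m ∈ Finset.range (ℓ - 1),
      (a : ℝ) ^ (m + 1) * (n : ℝ) ^ (-(ε * (ℓ - (m + 1))))) Filter.atTop (nhds 0) := by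
    have hz : (0 : ℝ) = ∑ v ∈ Finset.range (ℓ - 1), (0 : ℝ) := by simp
    rw [show nhds (0 : ℝ) = nhds (∑ v ∈ Finset.range (ℓ - 1), (0 : ℝ)) from congrArg nhds hz]
    refine tendsto_finsetSum _ fun m hm => ?_
    rw [show nhds (0 : ℝ) = nhds (((a : ℝ) ^ (m + 1)) * 0) by rw [mul_zero]]
    refine Filter.Tendsto.const_mul _ ?_
    refine (tendsto_rpow_neg_atTop ?_).comp tendsto_natCast_atTop_atTop
    have h1 : m + 1 < ℓ := by rw [Finset.mem_range] at hm; omega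
    have h2 : ((m : ℝ) + 1) < ℓ := by exact_mod_cast h1
    exact mul_pos hε0 (by linarith)
  refine h.congr' ?_
  filter_upwards [Filter.eventually_gt_atTop 0] with n hn
  have hn' : (0 : ℝ) < n := by exact_mod_cast hn
  rw [Finset.sum_div]
  refine Finset.sum_congr rfl fun m _ => ?_
  rw [mul_pow, mul_assoc, mul_div_assoc]
  congr 1
  rw [← Real.rpow_natCast (n : ℝ) (m + 1), ← Real.rpow_natCast ((n : ℝ) ^ (ε - 1)) (m + 1),
    ← Real.rpow_mul hn'.le, ← Real.rpow_add hn', ← Real.rpow_sub hn']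
  congr 1
  push_cast
  ring

lemma tendsto_dense (a ℓ : ℕ) (hℓ : 0 < ℓ) (ε : ℝ) (hε0 : 0 < ε) (hε : ε < 1 / (4 * ℓ)) :
    Filter.Tendsto (fun n : ℕ => ∑ v ∈ Finset.range (2 * ℓ - 1),
      (2 ^ (v * v) * ((a * n : ℝ) ^ v * ((n : ℝ) ^ (ε - 1)) ^ (v + 1))))
      Filter.atTop (nhds 0) := by
  have h : Filter.Tendsto (fun n : ℕ => ∑ v ∈ Finset.range (2 * ℓ - 1),
      (2 ^ (v * v) * (a : ℝ) ^ v) * (n : ℝ) ^ (-(1 - ε * (v + 1)))) Filter.atTop (nhds 0) := by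
    have hz : (0 : ℝ) = ∑ v ∈ Finset.range (2 * ℓ - 1), (0 : ℝ) := by simp
    rw [show nhds (0 : ℝ) = nhds (∑ v ∈ Finset.range (2 * ℓ - 1), (0 : ℝ)) from congrArg nhds hz]
    refine tendsto_finsetSum _ fun v hv => ?_
    rw [show nhds (0 : ℝ) = nhds ((2 ^ (v * v) * (a : ℝ) ^ v) * 0) by rw [mul_zero]]
    refine Filter.Tendsto.const_mul _ ?_
    refine (tendsto_rpow_neg_atTop ?_).comp tendsto_natCast_atTop_atTop
    have h1 : v + 1 < 2 * ℓ := by rw [Finset.mem_range] at hv; omega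
    have h2 : ((v : ℝ) + 1) < 2 * ℓ := by exact_mod_cast h1
    have hl : (0 : ℝ) < ℓ := by exact_mod_cast hℓ
    rw [lt_div_iff₀ (by positivity)] at hε
    nlinarith
  refine h.congr' ?_
  filter_upwards [Filter.eventually_gt_atTop 0] with n hn
  have hn' : (0 : ℝ) < n := by exact_mod_cast hn
  refine Finset.sum_congr rfl fun v _ => ?_
  rw [mul_pow, mul_assoc, mul_assoc]
  congr 2
  rw [← Real.rpow_natCast (n : ℝ) v, ← Real.rpow_natCast ((n : ℝ) ^ (ε - 1)) (v + 1),
    ← Real.rpow_mul hn'.le, ← Real.rpow_add hn']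
  congr 1
  push_cast
  ring

/-- With `0 < ε < 1/(4ℓ)` and `p = n^(ε−1)`, the probability that a random oriented graph
drawn from `𝒟(n, p)` has at most `n^(εℓ)` directed cycles of length less than `ℓ`, all of
which are pairwise vertex-disjoint, tends to `1` as `n → ∞`. -/
theorem aas_few_disjoint_short_cycles (a : ℕ) (D : OrientedGraph (Fin a)) (k ℓ : ℕ)
    (hk : 0 < k) (hℓ : 0 < ℓ) (ε : ℝ) (hε0 : 0 < ε) (hε : ε < 1 / (4 * ℓ)) :
    Filter.Tendsto
      (fun n : ℕ => model a n ((n : ℝ) ^ (ε - 1))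
        {ω : Omega a n |
          ((numShortCycles (Dhat D n ω) ℓ : ℝ) ≤ (n : ℝ) ^ (ε * (ℓ : ℝ))) ∧
          ∀ S T : Set (Vtx a n × Vtx a n),
            IsShortCycleArcSet (Dhat D n ω) ℓ S → IsShortCycleArcSet (Dhat D n ω) ℓ T →
            S ≠ T → ¬ ∃ x : Vtx a n, OnArcSet S x ∧ OnArcSet T x})
      Filter.atTop (nhds 1) := by
  have hlim : Filter.Tendsto (fun n : ℕ => (1 : ENNReal) -
      (ENNReal.ofReal ((∑ m ∈ Finset.range (ℓ - 1),
      ((a * n : ℝ) ^ (m + 1) * ((n : ℝ) ^ (ε - 1)) ^ (m + 1))) / (n : ℝ) ^ (ε * (ℓ : ℝ))) +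
      ENNReal.ofReal (∑ v ∈ Finset.range (2 * ℓ - 1),
      (2 ^ (v * v) * ((a * n : ℝ) ^ v * ((n : ℝ) ^ (ε - 1)) ^ (v + 1))))))
      Filter.atTop (nhds 1) := by
    have h1 := ENNReal.tendsto_ofReal (tendsto_count a ℓ ε hε0)
    have h2 := ENNReal.tendsto_ofReal (tendsto_dense a ℓ hℓ ε hε0 hε)
    have h3 := ENNReal.Tendsto.sub (tendsto_const_nhds (x := (1 : ENNReal))) (h1.add h2)
      (Or.inl ENNReal.one_ne_top)
    simpa using h3
  have hp : ∀ n : ℕ, 0 < n → 0 ≤ (n : ℝ) ^ (ε - 1) ∧ (n : ℝ) ^ (ε - 1) ≤ 1 := by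
    intro n hn
    refine ⟨by positivity, Real.rpow_le_one_of_one_le_of_nonpos (by exact_mod_cast hn) ?_⟩
    have hl : (1 : ℝ) ≤ ℓ := by exact_mod_cast hℓ
    rw [lt_div_iff₀ (by positivity)] at hε
    nlinarith
  refine tendsto_of_tendsto_of_tendsto_of_le_of_le' hlim tendsto_const_nhds ?_ ?_
  · filter_upwards [Filter.eventually_gt_atTop 0] with n hn
    obtain ⟨h0, h1⟩ := hp n hn
    have := model_prob a n _ h0 h1
    have hn' : (0 : ℝ) < n := by exact_mod_cast hn
    have b1 := count_bound a n D ℓ _ h0 h1 ((n : ℝ) ^ (ε * (ℓ : ℝ))) (by positivity)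
    have b2 := dense_bound a n D ℓ _ h0 h1
    rw [tsub_le_iff_right]
    refine le_trans ?_ (add_le_add_right (add_le_add b1 b2) _)
    rw [← measure_univ (μ := model a n ((n : ℝ) ^ (ε - 1)))]
    refine le_trans (measure_mono ?_) ((measure_union_le _ _).trans
      (add_le_add_right (measure_union_le _ _) _))
    intro ω _
    by_cases hA : (n : ℝ) ^ (ε * (ℓ : ℝ)) < (numShortCycles (Dhat D n ω) ℓ : ℝ)
    · exact Or.inr (Or.inl hA)
    by_cases hB : ∃ S T : Set (Vtx a n × Vtx a n),
            IsShortCycleArcSet (Dhat D n ω) ℓ S ∧ IsShortCycleArcSet (Dhat D n ω) ℓ T ∧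
            S ≠ T ∧ ∃ x : Vtx a n, OnArcSet S x ∧ OnArcSet T x
    · exact Or.inr (Or.inr hB)
    · exact Or.inl ⟨not_lt.1 hA, fun S T hS hT hne hx => hB ⟨S, T, hS, hT, hne, hx⟩⟩
  · filter_upwards [Filter.eventually_gt_atTop 0] with n hn
    obtain ⟨h0, h1⟩ := hp n hn
    have := model_prob a n _ h0 h1
    exact prob_le_one
end
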